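/- Let l be a positive integer, ζ a primitive l-th root of unity, and μ = (1^{m_1}, 2^{m_2}, …, n^{m_n}) a partition of a positive integer n. For each i, write m_i = l·q_i + r_i with 0 ≤ r_i ≤ l−1, and set μ̄ = (1^{r_1}, 2^{r_2}, …, n^{r_n}). Then Q'_μ(x; q, ζ) = (Q'_{(1^l)}(x;q,ζ))^{q_1} · (Q'_{(2^l)}(x;q,ζ))^{q_2} · ⋯ · (Q'_{(n^l)}(x;q,ζ))^{q_n} · Q'_{μ̄}(x; q, ζ). -/

import Mathlib

open MvPolynomial

noncomputable section MacdonaldPreliminaries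

/-! ### Base fields: `KK = ℂ(q)` and `FF = ℂ(q)(t)` -/

/-- The field `ℂ(q)` of rational functions in the indeterminate `q`. -/
abbrev KK : Type := RatFunc ℂ

/-- The field `ℂ(q)(t) = ℂ(q,t)`, rational functions in `t` over `ℂ(q)`. -/
abbrev FF : Type := RatFunc KK

/-- The indeterminate `q`, as an element of `ℂ(q)`. -/
def qK : KK := RatFunc.X

/-- The indeterminate `q`, as an element of `ℂ(q,t)`. -/
def qF : FF := RatFunc.C qK

/-- The indeterminate `t`, as an element of `ℂ(q,t)`. -/
def tF : FF := RatFunc.X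

/-! ### The ring of symmetric functions

We model the ring `Λ_R` of symmetric functions over `R` as the free commutative
`R`-algebra on the power sums `p₁, p₂, p₃, …`, i.e. as the polynomial ring in
countably many variables `X k`, `k : ℕ+`, where `X k` represents the power sum `p_k`. -/

/-- The ring of symmetric functions over `R`: polynomials in the power sums `p_k = X k`. -/
abbrev SymFn (R : Type) [CommSemiring R] : Type := MvPolynomial ℕ+ R

section Core

variable {R : Type} [Field R]

/-- The power sum `p_d` for `d : ℕ`, with `p_0 = 1` by convention. -/
def pN (d : ℕ) : SymFn R := if h : 0 < d then X (⟨d, h⟩ : ℕ+) else 1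

/-- `p_λ = ∏ p_{λᵢ}` for a partition `λ` given as a multiset of positive parts. -/
def pPar (lam : Multiset ℕ+) : SymFn R := (lam.map fun k => (X k : SymFn R)).prod

/-- The complete homogeneous symmetric functions, defined by Newton's recursion
`n·h_n = ∑_{i=1}^n p_i · h_{n-i}` with `h_0 = 1`. -/
def hsym : ℕ → SymFn R
  | 0 => 1
  | (n+1) => (((n : R) + 1)⁻¹) • ∑ i ∈ Finset.range (n+1),
      (X (⟨i+1, Nat.succ_pos i⟩ : ℕ+) : SymFn R) * hsym (n - i)
decreasing_by exact Nat.lt_succ_of_le (Nat.sub_le n i)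

/-- `h_z` for an integer index, vanishing for negative `z` (used in Jacobi–Trudi). -/
def hInt (z : ℤ) : SymFn R := if 0 ≤ z then hsym (R := R) z.toNat else 0

/-- The parts of a partition (a multiset of positive integers), sorted decreasingly. -/
def descParts (lam : Multiset ℕ+) : List ℕ :=
  ((lam.map fun a : ℕ+ => (a : ℕ)).sort (· ≤ ·)).reverse

/-- The weight `|λ|` of a partition. -/
def wt (lam : Multiset ℕ+) : ℕ := (lam.map fun a : ℕ+ => (a : ℕ)).sum

/-- The Schur function `s_λ`, via the Jacobi–Trudi formula
`s_λ = det(h_{λᵢ - i + j})₁≤i,j≤ℓ`. -/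
def schur (lam : Multiset ℕ+) : SymFn R :=
  Matrix.det (Matrix.of fun i j : Fin (Multiset.card lam) =>
    hInt (R := R) ((((descParts lam).getD i 0 : ℕ) : ℤ) + (j : ℤ) - (i : ℤ)))

/-- `h_ν = ∏ h_{νⱼ}` for a partition `ν`. -/
def hPar (nu : Multiset ℕ+) : SymFn R := (nu.map fun a => hsym (R := R) (a : ℕ)).prod

/-! ### Inner products -/

/-- The `(q,t)`-deformed weight `z_λ(q,t)` attached to the monomial `∏ (X k)^(m k)`,
namely `∏_k (m k)! · k^(m k) · ((1-q^k)/(1-t^k))^(m k)`. -/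
def zwtQT (q t : R) (m : ℕ+ →₀ ℕ) : R :=
  ∏ k ∈ m.support,
    ((Nat.factorial (m k) : R) * ((k : ℕ) : R) ^ (m k) *
      ((1 - q ^ (k : ℕ)) / (1 - t ^ (k : ℕ))) ^ (m k))

/-- The Macdonald inner product `⟨·,·⟩_{q,t}`, defined on the power sum basis by
`⟨p_λ, p_μ⟩_{q,t} = δ_{λμ} z_λ(q,t)`. -/
def innerQT (q t : R) (f g : SymFn R) : R :=
  ∑ m ∈ f.support, MvPolynomial.coeff m f * MvPolynomial.coeff m g * zwtQT q t m

/-- The classical weight `z_λ = ∏_k (m k)! k^(m k)` attached to a monomial. -/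
def zwtH (m : ℕ+ →₀ ℕ) : R :=
  ∏ k ∈ m.support, ((Nat.factorial (m k) : R) * ((k : ℕ) : R) ^ (m k))

/-- The standard Hall inner product, `⟨p_λ, p_μ⟩ = δ_{λμ} z_λ`. -/
def innerH (f g : SymFn R) : R :=
  ∑ m ∈ f.support, MvPolynomial.coeff m f * MvPolynomial.coeff m g * zwtH (R := R) m

/-- The internal (Kronecker) product `⋆`, determined by `p_λ ⋆ p_μ = δ_{λμ} z_λ p_λ`. -/
def star (f g : SymFn R) : SymFn R :=
  ∑ m ∈ f.support,
    MvPolynomial.monomial m (MvPolynomial.coeff m f * MvPolynomial.coeff m g * zwtH (R := R) m)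

/-! ### Dominance order and the Macdonald basis -/

/-- Sum of the `k` largest parts of `λ`. -/
def pSum (lam : Multiset ℕ+) (k : ℕ) : ℕ := ((descParts lam).take k).sum

/-- `μ` is strictly dominated by `λ`: same weight, `μ ≠ λ`, and all partial sums of the
decreasingly sorted parts of `μ` are at most those of `λ`. -/
def StrictDom (mu lam : Multiset ℕ+) : Prop :=
  mu ≠ lam ∧ wt mu = wt lam ∧ ∀ k, pSum mu k ≤ pSum lam k

/-- Characterization of the Macdonald basis `P_λ(x;q,t)` (obtained from the Schur basis by
Gram–Schmidt orthogonalization w.r.t. `⟨·,·⟩_{q,t}`): `P_λ` is unitriangular with respect to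
the Schur functions of strictly dominated partitions, and the `P_λ` are pairwise orthogonal. -/
def IsMacdonaldBasis (q t : R) (P : Multiset ℕ+ → SymFn R) : Prop :=
  (∀ lam, P lam - schur lam ∈
      Submodule.span R ((schur (R := R)) '' {mu | StrictDom mu lam})) ∧
  (∀ lam mu, lam ≠ mu → innerQT q t (P lam) (P mu) = 0)

/-- `Q_λ = P_λ / ⟨P_λ, P_λ⟩_{q,t}`. -/
def Qfam (q t : R) (P : Multiset ℕ+ → SymFn R) (lam : Multiset ℕ+) : SymFn R :=
  (innerQT q t (P lam) (P lam))⁻¹ • P lam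

/-- The algebra endomorphism of `Λ_R` rescaling each power sum: `p_k ↦ g k · p_k`. -/
def scaleHom (g : ℕ+ → R) : SymFn R →ₐ[R] SymFn R :=
  aeval fun k : ℕ+ => (C (g k) * X k : SymFn R)

/-- The modified Macdonald polynomial `Q'_λ(x;q,t) = Q_λ(((1-q)/(1-t))·x; q,t)`,
the image of `Q_λ` under `p_k ↦ ((1-q^k)/(1-t^k))·p_k`. -/
def Qprime (q t : R) (P : Multiset ℕ+ → SymFn R) (lam : Multiset ℕ+) : SymFn R :=
  scaleHom (fun k => (1 - q ^ (k : ℕ)) / (1 - t ^ (k : ℕ))) (Qfam q t P lam)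

/-! ### Plethysm -/

/-- Plethysm by the power sum on the left: `p_l ∘ f`, the ring endomorphism `p_k ↦ p_{lk}`
applied to `f`. -/
def plethP (l : ℕ+) : SymFn R →ₐ[R] SymFn R :=
  aeval fun k : ℕ+ => (X (l * k) : SymFn R)

/-- General plethysm `g ∘ f`: the algebra homomorphism in `g` sending `p_k` to `p_k ∘ f`. -/
def pleth (g f : SymFn R) : SymFn R :=
  aeval (fun k : ℕ+ => plethP k f) g

/-! ### Cells of a partition: arms, legs, the constants `c_μ`, `c'_μ` and `n(μ)` -/

/-- Arm length of the (0-indexed) cell `(i,j)` of `λ`: `λ_i - j - 1`. -/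
def armM (lam : Multiset ℕ+) (i j : ℕ) : ℕ := (descParts lam).getD i 0 - (j + 1)

/-- Leg length of the (0-indexed) cell `(i,j)` of `λ`: the number of cells below it
in the same column. -/
def legM (lam : Multiset ℕ+) (i j : ℕ) : ℕ :=
  ((List.range (descParts lam).length).filter
    (fun i' => decide (i < i') && decide (j < (descParts lam).getD i' 0))).length

/-- Product of a quantity over all cells of the partition `λ`. -/
def cellProd {S : Type} [CommMonoid S] (lam : Multiset ℕ+) (f : ℕ → ℕ → S) : S :=
  ∏ i ∈ Finset.range (descParts lam).length,
    ∏ j ∈ Finset.range ((descParts lam).getD i 0), f i j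

/-- `c_μ(q,t) = ∏_{s∈μ} (1 - q^{a(s)} t^{l(s)+1})`. -/
def cLow (q t : R) (lam : Multiset ℕ+) : R :=
  cellProd lam fun i j => 1 - q ^ (armM lam i j) * t ^ (legM lam i j + 1)

/-- `c'_μ(q,t) = ∏_{s∈μ} (1 - q^{a(s)+1} t^{l(s)})`. -/
def cUp (q t : R) (lam : Multiset ℕ+) : R :=
  cellProd lam fun i j => 1 - q ^ (armM lam i j + 1) * t ^ (legM lam i j)

/-- `n(λ) = ∑ (i-1)·λ_i`. -/
def nInv (lam : Multiset ℕ+) : ℕ :=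
  ∑ i ∈ Finset.range (descParts lam).length, i * (descParts lam).getD i 0

/-- The modified Macdonald polynomial of Haglund–Haiman–Loehr,
`H̃_μ(x;q,t) = t^{n(μ)} J_μ(x/(1-t⁻¹); q, t⁻¹)`, where `J_μ(x;q,t) = c_μ(q,t) P_μ(x;q,t)`
and `Pinv` is the Macdonald basis at parameters `(q, t⁻¹)`. -/
def Htilde (q t : R) (Pinv : Multiset ℕ+ → SymFn R) (lam : Multiset ℕ+) : SymFn R :=
  C (t ^ nInv lam) *
    scaleHom (fun k => (1 - (t⁻¹) ^ (k : ℕ))⁻¹) (C (cLow q t⁻¹ lam) * Pinv lam)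

/-! ### Cyclic characters -/

/-- The Ramanujan (Von Sterneck) sum `c(j,d)`: the sum of the `j`-th powers of the primitive
`d`-th roots of unity (computed in the domain `R`). -/
def cRam [IsDomain R] (j d : ℕ) : R := ∑ z ∈ primitiveRoots d R, z ^ j

/-- The Frobenius characteristic `l_k^{(j)} = (1/k) ∑_{d ∣ k} c(j,d) p_d^{k/d}` of the
representation of `S_k` induced from the `j`-th character of the cyclic subgroup generated
by a `k`-cycle. -/
def lchar [IsDomain R] (k j : ℕ) : SymFn R :=
  ((k : R))⁻¹ • ∑ d ∈ Nat.divisors k, (cRam (R := R) j d) • ((pN (R := R) d) ^ (k / d))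

end Core

/-! ### Specialization `t = ζ` and evaluation maps -/

/-- Evaluation of a rational function in `t` over `ℂ(q)` at a point `c : ℂ(q)`. -/
def evalT (c : KK) (x : FF) : KK := RatFunc.eval (RingHom.id KK) c x

/-- Coefficientwise specialization `t = c` of a symmetric function over `ℂ(q,t)`. -/
def specT (c : KK) (f : SymFn FF) : SymFn KK :=
  ∑ m ∈ f.support, MvPolynomial.monomial m (evalT c (MvPolynomial.coeff m f))

/-- Evaluation `f ↦ f(1, ζ, ζ², …, ζ^{l-1}; q, ζ)`: substitute the finite alphabet
`x_i = ζ^{i-1}` (`1 ≤ i ≤ l`) and then specialize `t = ζ`. -/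
def macEvalRoots (l : ℕ) (z : ℂ) (f : SymFn FF) : KK :=
  evalT (RatFunc.C z)
    ((aeval fun k : ℕ+ =>
        ∑ i ∈ Finset.range l, (RatFunc.C (RatFunc.C z) : FF) ^ (i * (k : ℕ))) f)

/-- Evaluation of a symmetric function over `ℂ(q,t)` at the finite alphabet
`(1, t, t², …, t^{l-1})`. -/
def evalAlphT (l : ℕ) : SymFn FF →ₐ[FF] FF :=
  aeval fun k : ℕ+ => ∑ i ∈ Finset.range l, tF ^ (i * (k : ℕ))

/-- Congruence to `0` modulo the cyclotomic polynomial `Φ_l(t)` for a rational function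
in `t`: `x = Φ_l(t) · (a/b)` with `b` coprime to `Φ_l`. -/
def CongrModPhi (l : ℕ) (x : FF) : Prop :=
  ∃ a b : Polynomial KK, IsCoprime b (Polynomial.cyclotomic l KK) ∧
    x = algebraMap (Polynomial KK) FF (Polynomial.cyclotomic l KK) *
      (algebraMap (Polynomial KK) FF a / algebraMap (Polynomial KK) FF b)

/-- The finite set of all partitions of `n`, as multisets of positive integers. -/
def partitionsOf (n : ℕ) : Finset (Multiset ℕ+) :=
  Finset.univ.image fun pi : Nat.Partition n =>
    pi.parts.attach.map fun a => (⟨a.1, pi.parts_pos a.2⟩ : ℕ+)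

end MacdonaldPreliminaries

noncomputable section

open MvPolynomial

/-! Macdonald's operator is triangular on the products `h_μ`, with diagonal entries determined by
`μ`, and the `Q'_μ` are its unitriangular eigenvectors; it depends on `t` only through `s = t⁻¹`.
At `s = σ = ζ⁻¹` the eigenvalues of `μ` and `ρ` coincide exactly when `μ̄ = ρ̄`. For `a ≥ 1` the
function `F_a = h_{la}[X (1 + σ + ⋯ + σ^{l-1})]` is invariant under the shift
`p_k ↦ p_k + (1 - σ^k) y^k` on which the operator is built, so multiplication by `F_a` commutes
with the operator at `s = σ`. Hence the products `∏ F_a ^ q_a · g_μ̄`, where `g_λ` is an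
eigenvector for `λ = λ̄`, form an eigenbasis there, unitriangular once the `F_a` are normalized.

This eigenbasis is the specialization of the `Q'_μ` although its eigenvalues are degenerate. Let
`p` be a uniformizer at `t = ζ`. In the eigenbasis the off-diagonal entries of the operator over
the local ring are divisible by `p`; those with `μ̄ = ρ̄` are even divisible by `p²`, since modulo
`p²` the operator obeys a product rule on the products of the `F_a`. The eigenvalues of `μ ≠ ρ`
differ by a unit for `μ̄ ≠ ρ̄`, and their difference has a simple zero for `μ̄ = ρ̄`, so in both
cases back substitution leaves `Q'_μ` congruent to the basis vector modulo `p`. -/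

namespace Macdonald

section Partitions

lemma wt_zero : wt 0 = 0 := by simp [wt]

lemma wt_cons (a : ℕ+) (μ : Multiset ℕ+) : wt (a ::ₘ μ) = a + wt μ := by simp [wt]

lemma wt_singleton (a : ℕ+) : wt {a} = a := by simp [wt]

lemma wt_add (μ ν : Multiset ℕ+) : wt (μ + ν) = wt μ + wt ν := by simp [wt]

lemma wt_nsmul (k : ℕ) (μ : Multiset ℕ+) : wt (k • μ) = k * wt μ := by
  simp [wt, Multiset.map_nsmul, Multiset.sum_nsmul]

lemma le_wt_of_mem {μ : Multiset ℕ+} {a : ℕ+} (ha : a ∈ μ) : (a : ℕ) ≤ wt μ := by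
  rw [← Multiset.cons_erase ha, wt_cons]
  omega

lemma finite_setOf_wt_eq (n : ℕ) : {μ : Multiset ℕ+ | wt μ = n}.Finite := by
  have hinj : Function.Injective (Multiset.map fun a : ℕ+ ↦ (a : ℕ)) :=
    Multiset.map_injective PNat.coe_injective
  refine Set.Finite.of_finite_image ((Set.finite_range (Nat.Partition.parts (n := n))).subset ?_)
    hinj.injOn
  rintro _ ⟨μ, hμ, rfl⟩
  refine ⟨⟨_, fun hi ↦ ?_, hμ⟩, rfl⟩
  obtain ⟨a, -, rfl⟩ := Multiset.mem_map.1 hi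
  exact a.pos

lemma maxPartInduction {p : Multiset ℕ+ → Prop} (zero : p 0)
    (cons : ∀ a μ, (∀ b ∈ μ, b ≤ a) → p μ → p (a ::ₘ μ)) (μ : Multiset ℕ+) : p μ := by
  induction μ using Multiset.strongInductionOn with
  | _ μ ih =>
    rcases eq_or_ne μ 0 with rfl | hμ
    · exact zero
    obtain ⟨k, hk⟩ := Multiset.exists_mem_of_ne_zero hμ
    obtain ⟨a, ha, hmax⟩ := Finset.exists_max_image μ.toFinset id ⟨k, by simpa using hk⟩
    rw [Multiset.mem_toFinset] at ha
    rw [← Multiset.cons_erase ha]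
    exact cons a _ (fun b hb ↦ hmax b (by simpa using Multiset.mem_of_mem_erase hb))
      (ih _ (Multiset.erase_lt.2 ha))

lemma descParts_zero : descParts 0 = [] := by simp [descParts]

lemma descParts_cons {a : ℕ+} {μ : Multiset ℕ+} (ha : ∀ b ∈ μ, b ≤ a) :
    descParts (a ::ₘ μ) = (a : ℕ) :: descParts μ := by
  unfold descParts
  rw [List.reverse_eq_iff, List.reverse_cons, List.reverse_reverse]
  refine List.Perm.eq_of_pairwise (fun _ _ _ _ ↦ le_antisymm)
    (Multiset.pairwise_sort _ (· ≤ ·)) ?_ ?_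
  · refine List.pairwise_append.2 ⟨Multiset.pairwise_sort _ _, by simp, ?_⟩
    simpa using ha
  · rw [← Multiset.coe_eq_coe]
    simp [← Multiset.coe_add, add_comm _ {(a : ℕ)}]

end Partitions

section ColexOrder

/-- The multiplicity function of a partition, ordered colexicographically: partitions are compared
by the multiplicity of the largest part at which they differ. This total order refines the
dominance order. -/
def colexKey (μ : Multiset ℕ+) : Colex (ℕ+ →₀ ℕ) := toColex (Multiset.toFinsupp μ)

lemma colexKey_injective : Function.Injective colexKey := fun μ ν h ↦
  Multiset.toFinsupp.injective (by simpa [colexKey] using h)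

lemma colexKey_add (μ ν : Multiset ℕ+) : colexKey (μ + ν) = colexKey μ + colexKey ν := by
  simp [colexKey]

lemma colexKey_lt_iff {μ ν : Multiset ℕ+} : colexKey μ < colexKey ν ↔
    ∃ k, (∀ j, k < j → μ.count j = ν.count j) ∧ μ.count k < ν.count k := by
  simp [colexKey, Finsupp.Colex.lt_iff, Multiset.toFinsupp_apply]

lemma colexKey_lt_of_forall_lt {μ ν : Multiset ℕ+} {k : ℕ+} (hμ : ∀ a ∈ μ, a < k) (hν : k ∈ ν) :
    colexKey μ < colexKey ν := by
  rcases lt_trichotomy (colexKey μ) (colexKey ν) with h | h | h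
  · exact h
  · rw [colexKey_injective h] at hμ
    exact absurd (hμ k hν) (lt_irrefl _)
  · obtain ⟨j, hj, hj'⟩ := colexKey_lt_iff.1 h
    have hjk := hj k (hμ j (Multiset.count_pos.1 (by omega)))
    rw [Multiset.count_eq_zero.2 fun hk ↦ lt_irrefl _ (hμ k hk)] at hjk
    exact absurd hν (Multiset.count_eq_zero.1 hjk)

lemma colexKey_zero_lt {μ : Multiset ℕ+} (hμ : μ ≠ 0) : colexKey 0 < colexKey μ := by
  obtain ⟨k, hk⟩ := Multiset.exists_mem_of_ne_zero hμ
  exact colexKey_lt_of_forall_lt (by simp) hk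

lemma colexKey_add_lt_add_left {μ ν : Multiset ℕ+} (ρ : Multiset ℕ+) :
    colexKey (ρ + μ) < colexKey (ρ + ν) ↔ colexKey μ < colexKey ν := by
  simp only [colexKey_add, add_lt_add_iff_left]

lemma exists_pSum_lt_of_colexKey_lt {μ : Multiset ℕ+} :
    ∀ {ν}, colexKey ν < colexKey μ → ∃ j, pSum ν j < pSum μ j := by
  induction μ using maxPartInduction with
  | zero =>
    intro ν h
    rcases eq_or_ne ν 0 with rfl | hν
    · exact absurd h (lt_irrefl _)
    · exact absurd h (lt_asymm (colexKey_zero_lt hν))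
  | cons a μ ha ih =>
    intro ν
    induction ν using maxPartInduction with
    | zero => exact fun _ ↦ ⟨1, by simp [pSum, descParts_cons ha, descParts_zero]⟩
    | cons b ν hb _ =>
      intro h
      rcases lt_trichotomy b a with hba | rfl | hab
      · exact ⟨1, by simpa [pSum, descParts_cons ha, descParts_cons hb] using hba⟩
      · rw [← Multiset.singleton_add, ← Multiset.singleton_add, colexKey_add_lt_add_left] at h
        obtain ⟨j, hj⟩ := ih h
        exact ⟨j + 1, by simpa [pSum, descParts_cons ha, descParts_cons hb] using hj⟩
      · refine absurd h (lt_asymm (colexKey_lt_of_forall_lt (k := b) ?_ (by simp)))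
        exact Multiset.forall_mem_cons.2 ⟨hab, fun c hc ↦ (ha c hc).trans_lt hab⟩

lemma colexKey_lt_of_strictDom {μ ν : Multiset ℕ+} (h : StrictDom μ ν) :
    colexKey μ < colexKey ν := by
  rcases lt_trichotomy (colexKey μ) (colexKey ν) with hlt | heq | hgt
  · exact hlt
  · exact absurd (colexKey_injective heq) h.1
  · obtain ⟨j, hj⟩ := exists_pSum_lt_of_colexKey_lt hgt
    exact absurd (h.2.2 j) (by omega)

/-- The colexicographic order restricted to partitions of equal weight. The restriction makes it
well-founded in both directions. -/
def Precedes (μ ν : Multiset ℕ+) : Prop := wt μ = wt ν ∧ colexKey μ < colexKey ν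

infix:50 " ≺ " => Precedes

instance : IsStrictOrder (Multiset ℕ+) Precedes where
  irrefl _ h := lt_irrefl _ h.2
  trans _ _ _ h h' := ⟨h.1.trans h'.1, h.2.trans h'.2⟩

lemma add_precedes_add_left {μ ν : Multiset ℕ+} (ρ : Multiset ℕ+) : ρ + μ ≺ ρ + ν ↔ μ ≺ ν :=
  and_congr (by simp only [wt_add, add_right_inj]) (colexKey_add_lt_add_left ρ)

lemma add_precedes_add_right {μ ν : Multiset ℕ+} (ρ : Multiset ℕ+) : μ + ρ ≺ ν + ρ ↔ μ ≺ ν := by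
  simpa only [add_comm _ ρ] using add_precedes_add_left ρ

lemma wellFounded_of_finite_lower {ι : Type*} {r : ι → ι → Prop} [IsStrictOrder ι r]
    (hfin : ∀ i, {j | r j i}.Finite) : WellFounded r := by
  refine Subrelation.wf (r := InvImage (· < ·) fun i ↦ {j | r j i}.ncard) (fun {i j} hij ↦ ?_)
    (InvImage.wf _ wellFounded_lt)
  refine Set.ncard_lt_ncard ⟨fun k hk ↦ _root_.trans hk hij, fun h ↦ ?_⟩ (hfin j)
  exact irrefl i (h hij)

lemma wellFounded_precedes : WellFounded Precedes :=
  wellFounded_of_finite_lower fun μ ↦ (finite_setOf_wt_eq (wt μ)).subset fun _ h ↦ h.1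

lemma wellFounded_swap_precedes : WellFounded (Function.swap Precedes) :=
  wellFounded_of_finite_lower fun μ ↦ (finite_setOf_wt_eq (wt μ)).subset fun _ h ↦ h.1.symm

end ColexOrder

section Eigenvalues

/-- The part `μ'_{j+1}` of the conjugate partition. -/
def conjPart (μ : Multiset ℕ+) (j : ℕ) : ℕ := μ.countP fun a : ℕ+ ↦ j < a

lemma conjPart_eq_zero {μ : Multiset ℕ+} {j : ℕ} (hj : ∀ a : ℕ+, a ∈ μ → (a : ℕ) ≤ j) :
    conjPart μ j = 0 :=
  Multiset.countP_eq_zero.2 fun a ha ↦ not_lt.2 (hj a ha)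

lemma conjPart_cons (a : ℕ+) (μ : Multiset ℕ+) (j : ℕ) :
    conjPart (a ::ₘ μ) j = conjPart μ j + if j < a then 1 else 0 := by
  simp [conjPart, Multiset.countP_cons]

variable {S : Type*} [CommRing S]

/-- The eigenvalue of Macdonald's operator at `μ`. It equals `1 - (1-q)(1-s) ∑ q^j s^i`, summed over
the cells `(i, j)` of the diagram of `μ`; here each column is summed as a geometric series. -/
def eig (q s : S) (μ : Multiset ℕ+) : S :=
  1 - (1 - q) * ∑ j ∈ Finset.range (wt μ), q ^ j * (1 - s ^ conjPart μ j)

lemma eig_eq_sum_range (q s : S) {μ : Multiset ℕ+} {n : ℕ} (hn : ∀ a : ℕ+, a ∈ μ → (a : ℕ) ≤ n) :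
    eig q s μ = 1 - (1 - q) * ∑ j ∈ Finset.range n, q ^ j * (1 - s ^ conjPart μ j) := by
  have key {m k : ℕ} (hmk : m ≤ k) (hm : ∀ a : ℕ+, a ∈ μ → (a : ℕ) ≤ m) :
      ∑ j ∈ Finset.range m, q ^ j * (1 - s ^ conjPart μ j) =
        ∑ j ∈ Finset.range k, q ^ j * (1 - s ^ conjPart μ j) := by
    refine Finset.sum_subset (Finset.range_mono hmk) fun j _ hj ↦ ?_
    rw [Finset.mem_range, not_lt] at hj
    simp [conjPart_eq_zero fun a ha ↦ (hm a ha).trans hj]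
  rw [eig]
  rcases le_total n (wt μ) with h | h
  · rw [key h hn]
  · rw [key h fun a ↦ le_wt_of_mem]

lemma eig_zero (q s : S) : eig q s 0 = 1 := by simp [eig, wt_zero]

lemma eig_cons (q s : S) {a : ℕ+} {μ : Multiset ℕ+} (ha : ∀ b ∈ μ, b ≤ a) :
    eig q s (a ::ₘ μ) = s * eig q s μ + (1 - s) * q ^ (a : ℕ) := by
  have ha' : ∀ b : ℕ+, b ∈ μ → (b : ℕ) ≤ a := ha
  rw [eig_eq_sum_range q s ha', eig_eq_sum_range q s (n := a) (by simpa using ha'),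
    ← sub_sub_cancel 1 (q ^ (a : ℕ)), ← mul_neg_geom_sum]
  have hcol : ∀ j ∈ Finset.range a, q ^ j * (1 - s ^ conjPart (a ::ₘ μ) j) =
      (1 - s) * q ^ j + s * (q ^ j * (1 - s ^ conjPart μ j)) := fun j hj ↦ by
    rw [conjPart_cons, if_pos (Finset.mem_range.1 hj)]
    ring
  rw [Finset.sum_congr rfl hcol, Finset.sum_add_distrib, ← Finset.mul_sum, ← Finset.mul_sum]
  ring

lemma map_eig {S' : Type*} [CommRing S'] (f : S →+* S') (q s : S) (μ : Multiset ℕ+) :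
    f (eig q s μ) = eig (f q) (f s) μ := by
  simp [eig]

end Eigenvalues

section UpperSpan

variable {ι S M : Type*} [CommRing S] [AddCommGroup M] [Module S M]

/-- The span of the vectors `b j` for `j` above `i` with respect to the relation `r`. -/
def upperSpan (S : Type*) {ι M : Type*} [CommRing S] [AddCommGroup M] [Module S M]
    (r : ι → ι → Prop) (b : ι → M) (i : ι) : Submodule S M :=
  Submodule.span S (b '' {j | r i j})

/-- The family `B` is unitriangular with respect to the family `b` for the relation `r`. -/
def IsUnitriangular (S : Type*) {ι M : Type*} [CommRing S] [AddCommGroup M] [Module S M]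
    (r : ι → ι → Prop) (b B : ι → M) : Prop :=
  ∀ i, B i - b i ∈ upperSpan S r b i

/-- The endomorphism `T` is triangular with respect to the family `b` for the relation `r`, with
diagonal `e`. -/
def IsTriangular (r : ι → ι → Prop) (b : ι → M) (T : M →ₗ[S] M) (e : ι → S) : Prop :=
  ∀ i, T (b i) - e i • b i ∈ upperSpan S r b i

variable {r : ι → ι → Prop} {b B : ι → M}

lemma mem_upperSpan {i j : ι} (hij : r i j) : b j ∈ upperSpan S r b i :=
  Submodule.subset_span ⟨j, hij, rfl⟩

lemma upperSpan_le_iff {i : ι} {N : Submodule S M} :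
    upperSpan S r b i ≤ N ↔ ∀ j, r i j → b j ∈ N := by
  rw [upperSpan, Submodule.span_le, Set.image_subset_iff]
  rfl

lemma upperSpan_mono_rel {r' : ι → ι → Prop} {i : ι} (h : ∀ j, r i j → r' i j) :
    upperSpan S r b i ≤ upperSpan S r' b i :=
  upperSpan_le_iff.2 fun j hij ↦ mem_upperSpan (h j hij)

lemma map_mem_of_mem_upperSpan {M' : Type*} [AddCommGroup M'] [Module S M'] {N : Submodule S M'}
    {f : M →ₗ[S] M'} {i : ι} (h : ∀ j, r i j → f (b j) ∈ N) {x : M} (hx : x ∈ upperSpan S r b i) :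
    f x ∈ N :=
  upperSpan_le_iff (N := N.comap f).2 h hx

lemma upperSpan_mono [IsTrans ι r] {i j : ι} (hij : r i j) :
    upperSpan S r b j ≤ upperSpan S r b i :=
  upperSpan_le_iff.2 fun _ hk ↦ mem_upperSpan (_root_.trans hij hk)

lemma IsUnitriangular.mem_upperSpan [IsTrans ι r] (h : IsUnitriangular S r b B) {i j : ι}
    (hij : r i j) : B j ∈ upperSpan S r b i := by
  simpa using add_mem (upperSpan_mono hij (h j)) (Macdonald.mem_upperSpan hij)

lemma IsUnitriangular.symm [IsTrans ι r] (hwf : WellFounded (Function.swap r))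
    (h : IsUnitriangular S r b B) : IsUnitriangular S r B b := by
  have hle : ∀ i, upperSpan S r b i ≤ upperSpan S r B i := fun i ↦ by
    refine upperSpan_le_iff.2 fun j ↦ ?_
    induction j using hwf.induction with
    | _ j ih =>
      intro hij
      have hsub : B j - b j ∈ upperSpan S r B i :=
        upperSpan_le_iff.2 (fun k hjk ↦ ih k hjk (_root_.trans hij hjk)) (h j)
      simpa using sub_mem (Macdonald.mem_upperSpan hij) hsub
  exact fun i ↦ by simpa using neg_mem (hle i (h i))

lemma IsUnitriangular.span_eq_top [IsTrans ι r] (hwf : WellFounded (Function.swap r))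
    (h : IsUnitriangular S r b B) (hb : Submodule.span S (Set.range b) = ⊤) :
    Submodule.span S (Set.range B) = ⊤ := by
  rw [eq_top_iff, ← hb, Submodule.span_le]
  rintro _ ⟨i, rfl⟩
  have hle : upperSpan S r B i ≤ Submodule.span S (Set.range B) :=
    Submodule.span_mono (Set.image_subset_range _ _)
  simpa using add_mem (hle (h.symm hwf i)) (Submodule.subset_span ⟨i, rfl⟩)

lemma IsTriangular.sub_smul_mem [IsTrans ι r] {T : M →ₗ[S] M} {e : ι → S}
    (hT : IsTriangular r b T e) {i : ι} {x : M} (hx : x - b i ∈ upperSpan S r b i) :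
    T x - e i • x ∈ upperSpan S r b i := by
  have hupper : T (x - b i) - e i • (x - b i) ∈ upperSpan S r b i := by
    refine sub_mem (map_mem_of_mem_upperSpan (fun j hij ↦ ?_) hx) (Submodule.smul_mem _ _ hx)
    simpa using add_mem (upperSpan_mono hij (hT j))
      (Submodule.smul_mem _ (e j) (Macdonald.mem_upperSpan hij))
  convert add_mem hupper (hT i) using 1
  rw [map_sub, smul_sub]
  abel

lemma IsTriangular.of_isUnitriangular [IsTrans ι r] (hwf : WellFounded (Function.swap r))
    {T : M →ₗ[S] M} {e : ι → S} (hT : IsTriangular r b T e) (h : IsUnitriangular S r b B) :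
    IsTriangular r B T e := by
  have hle : ∀ i, upperSpan S r b i ≤ upperSpan S r B i := fun i ↦
    upperSpan_le_iff.2 fun j hij ↦ (h.symm hwf).mem_upperSpan hij
  exact fun i ↦ hle i (hT.sub_smul_mem (h i))

lemma repr_eq_zero_of_mem_upperSpan (b : Module.Basis ι S M) {i k : ι} (hik : ¬ r i k) {x : M}
    (hx : x ∈ upperSpan S r b i) : b.repr x k = 0 := by
  refine map_mem_of_mem_upperSpan (N := ⊥) (f := b.coord k) (fun j hij ↦ ?_) hx
  have hjk : j ≠ k := fun h ↦ hik (h ▸ hij)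
  simp [hjk]

end UpperSpan

section Eigenvectors

variable {ι F M : Type*} [Field F] [AddCommGroup M] [Module F M] {r : ι → ι → Prop} [IsTrans ι r]
  {b : ι → M}

lemma IsTriangular.exists_eigenvector (hwf : WellFounded (Function.swap r)) {T : M →ₗ[F] M}
    {e : ι → F} (hT : IsTriangular r b T e) {i : ι} (he : ∀ j, r i j → e j ≠ e i) :
    ∃ v, v - b i ∈ upperSpan F r b i ∧ T v = e i • v := by
  set N : M →ₗ[F] M := T - e i • LinearMap.id
  have hN : ∀ x, N x = T x - e i • x := fun _ ↦ rfl
  have hsurj : upperSpan F r b i ≤ (upperSpan F r b i).map N := by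
    refine upperSpan_le_iff.2 fun j ↦ ?_
    induction j using hwf.induction with
    | _ j ih =>
      intro hij
      have hupper : T (b j) - e j • b j ∈ (upperSpan F r b i).map N :=
        upperSpan_le_iff.2 (fun k hjk ↦ ih k hjk (_root_.trans hij hjk)) (hT j)
      have hNb : N (b j) ∈ (upperSpan F r b i).map N :=
        Submodule.mem_map_of_mem (mem_upperSpan hij)
      have hdiff : (e j - e i) • b j ∈ (upperSpan F r b i).map N := by
        convert sub_mem hNb hupper using 1
        rw [hN, sub_smul]
        abel
      simpa [sub_ne_zero.2 (he j hij)] using Submodule.smul_mem _ (e j - e i)⁻¹ hdiff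
  obtain ⟨w, hw, hwN⟩ := hsurj (hT i)
  refine ⟨b i - w, by simpa using neg_mem hw, ?_⟩
  rw [hN] at hwN
  rw [map_sub, smul_sub, sub_eq_sub_iff_sub_eq_sub]
  exact hwN.symm

end Eigenvectors

section DualFamilies

variable {ι α S M : Type*} [CommRing S] [AddCommGroup M] [Module S M] [LinearOrder α]
  {key : ι → α} {v : ι → M} {φ : ι → M →ₗ[S] S}

lemma exists_apply_linearCombination_eq (hkey : Function.Injective key)
    (hdiag : ∀ i, φ i (v i) = 1) (hφ : ∀ i j, key i < key j → φ i (v j) = 0) {c : ι →₀ S}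
    (hc : c ≠ 0) :
    ∃ i, c i ≠ 0 ∧ (∀ j, c j ≠ 0 → key i ≤ key j) ∧
      φ i (Finsupp.linearCombination S v c) = c i := by
  obtain ⟨i, hi, hmin⟩ :=
    Finset.exists_min_image c.support key (Finsupp.support_nonempty_iff.2 hc)
  have hmin' : ∀ j, c j ≠ 0 → key i ≤ key j := fun j hj ↦ hmin j (Finsupp.mem_support_iff.2 hj)
  refine ⟨i, Finsupp.mem_support_iff.1 hi, hmin', ?_⟩
  rw [Finsupp.linearCombination_apply, Finsupp.sum, map_sum, Finset.sum_eq_single_of_mem i hi]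
  · rw [map_smul, hdiag, smul_eq_mul, mul_one]
  · intro j hj hji
    rw [map_smul, hφ i j ((hmin j hj).lt_of_ne (hkey.ne hji.symm)), smul_zero]

lemma linearIndependent_of_dual_triangular (hkey : Function.Injective key)
    (hdiag : ∀ i, φ i (v i) = 1) (hφ : ∀ i j, key i < key j → φ i (v j) = 0) :
    LinearIndependent S v := by
  refine linearIndependent_iff.2 fun c hc ↦ ?_
  by_contra hne
  obtain ⟨i, hi, -, hφi⟩ := exists_apply_linearCombination_eq hkey hdiag hφ hne
  rw [hc, map_zero] at hφi
  exact hi hφi.symm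

lemma eq_zero_of_forall_dual_eq_zero (hkey : Function.Injective key)
    (hdiag : ∀ i, φ i (v i) = 1) (hφ : ∀ i j, key i < key j → φ i (v j) = 0)
    (hv : Submodule.span S (Set.range v) = ⊤) {x : M} (hx : ∀ i, φ i x = 0) : x = 0 := by
  obtain ⟨c, rfl⟩ : x ∈ LinearMap.range (Finsupp.linearCombination S v) := by
    rw [Finsupp.range_linearCombination, hv]
    trivial
  by_contra hne
  have hc : c ≠ 0 := fun h ↦ hne (by simp [h])
  obtain ⟨i, hi, -, hφi⟩ := exists_apply_linearCombination_eq hkey hdiag hφ hc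
  exact hi (hφi.symm.trans (hx i))

lemma sub_smul_mem_upperSpan_of_forall_dual_eq_zero (hkey : Function.Injective key)
    (hdiag : ∀ i, φ i (v i) = 1) (hφ : ∀ i j, key i < key j → φ i (v j) = 0)
    (hv : Submodule.span S (Set.range v) = ⊤) {i : ι} {x : M} (hx : ∀ j, j ≠ i → φ j x = 0) :
    x - φ i x • v i ∈ upperSpan S (fun j k ↦ key j < key k) v i := by
  obtain ⟨c, rfl⟩ : x ∈ LinearMap.range (Finsupp.linearCombination S v) := by
    rw [Finsupp.range_linearCombination, hv]
    trivial
  classical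
  rcases eq_or_ne c 0 with rfl | hc
  · simp
  obtain ⟨j, hj, hmin, hφj⟩ := exists_apply_linearCombination_eq hkey hdiag hφ hc
  obtain rfl : j = i := by
    by_contra hji
    exact hj (hφj.symm.trans (hx j hji))
  rw [hφj, Finsupp.linearCombination_apply, Finsupp.sum,
    ← Finset.sum_erase_add _ _ (Finsupp.mem_support_iff.2 hj), add_sub_cancel_right]
  refine sum_mem fun k hk ↦ Submodule.smul_mem _ _ (mem_upperSpan ?_)
  obtain ⟨hkj, hk⟩ := Finset.mem_erase.1 hk
  exact (hmin k (Finsupp.mem_support_iff.1 hk)).lt_of_ne (hkey.ne hkj.symm)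

end DualFamilies

section Perturbation

variable {ι A F : Type*} [CommRing A] [Field F] [Algebra A F]

/-- Back substitution along `r`: dividing by a diagonal difference associated to `w` loses a factor
`w`, which the entry `d i m` makes up for. -/
lemma exists_eq_algebraMap_mul_of_eigenvector {r : ι → ι → Prop} (hwf : WellFounded r) {p : A}
    (hp : algebraMap A F p ≠ 0) {d : ι → ι → A} (hd : ∀ i j, d i j ≠ 0 → j = i ∨ r j i)
    (hdvd : ∀ i j, j ≠ i → p ∣ d i j) {m : ι}
    (hsep : ∀ i, i ≠ m → ∃ w, w ∣ p ∧ Associated w (d m m - d i i) ∧ w * p ∣ d i m)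
    {c : ι →₀ F} (hcm : c m = 1)
    (hc : ∀ i, c.sum (fun j x ↦ algebraMap A F (d i j) * x) = algebraMap A F (d m m) * c i)
    {i : ι} (him : i ≠ m) : ∃ a, c i = algebraMap A F (p * a) := by
  classical
  induction i using hwf.induction with
  | _ i ih =>
  obtain ⟨w, ⟨v, rfl⟩, ⟨u, hu⟩, hwp⟩ := hsep i him
  have hw : algebraMap A F w ≠ 0 := fun h ↦ hp (by rw [map_mul, h, zero_mul])
  have hterm : ∀ j ∈ c.support.erase i, ∃ a,
      algebraMap A F (d i j) * c j = algebraMap A F (w * (w * v) * a) := fun j hj ↦ by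
    have hji := Finset.ne_of_mem_erase hj
    rcases eq_or_ne j m with rfl | hjm
    · obtain ⟨a, ha⟩ := hwp
      exact ⟨a, by rw [hcm, mul_one, ha]⟩
    rcases eq_or_ne (d i j) 0 with h0 | h0
    · exact ⟨0, by simp [h0]⟩
    obtain ⟨a, ha⟩ := ih j ((hd i j h0).resolve_left hji) hjm
    obtain ⟨b, hb⟩ := hdvd i j hji
    exact ⟨v * b * a, by rw [ha, hb, ← map_mul]; congr 1; ring⟩
  have hsolve : algebraMap A F (w * u) * c i =
      ∑ j ∈ c.support.erase i, algebraMap A F (d i j) * c j := by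
    rw [hu, map_sub, sub_mul, ← hc i, sub_eq_iff_eq_add, Finsupp.sum]
    by_cases hi : i ∈ c.support
    · rw [Finset.sum_erase_add _ _ hi]
    · rw [Finset.erase_eq_of_notMem hi, Finsupp.notMem_support_iff.1 hi, mul_zero, add_zero]
  choose! a ha using hterm
  rw [Finset.sum_congr rfl ha, ← map_sum, ← Finset.mul_sum, mul_assoc w, map_mul, map_mul,
    mul_assoc] at hsolve
  refine ⟨↑u⁻¹ * ∑ j ∈ c.support.erase i, a j, ?_⟩
  rw [mul_left_comm, map_mul, ← mul_left_cancel₀ hw hsolve, ← mul_assoc, ← map_mul, Units.inv_mul,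
    map_one, one_mul]

end Perturbation

section NewtonRecursion

variable {S : Type*} [CommRing S] [Algebra ℚ S]

/-- The values of the complete homogeneous symmetric functions at an alphabet whose power sums are
`p 1, p 2, …`, defined by Newton's recursion. -/
def hOf (p : ℕ+ → S) : ℕ → S
  | 0 => 1
  | n + 1 => ((n : ℚ) + 1)⁻¹ • ∑ i ∈ Finset.range (n + 1), p i.succPNat * hOf p (n - i)
decreasing_by exact Nat.lt_succ_of_le (Nat.sub_le n i)

lemma hOf_zero (p : ℕ+ → S) : hOf p 0 = 1 := by rw [hOf]

lemma inv_smul_succ_mul (n : ℕ) (x : S) : ((n : ℚ) + 1)⁻¹ • (((n : S) + 1) * x) = x := by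
  have hn : ((n : S) + 1) = algebraMap ℚ S ((n : ℚ) + 1) := by simp
  rw [hn, ← Algebra.smul_def, inv_smul_smul₀ (by positivity)]

lemma succ_mul_left_cancel {n : ℕ} {x y : S} (h : ((n : S) + 1) * x = ((n : S) + 1) * y) :
    x = y := by
  rw [← inv_smul_succ_mul n x, h, inv_smul_succ_mul]

lemma succ_mul_hOf_succ (p : ℕ+ → S) (n : ℕ) :
    ((n : S) + 1) * hOf p (n + 1) =
      ∑ i ∈ Finset.range (n + 1), p i.succPNat * hOf p (n - i) := by
  rw [hOf, mul_smul_comm, inv_smul_succ_mul]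

lemma eq_hOf {p : ℕ+ → S} {f : ℕ → S} (h0 : f 0 = 1)
    (hsucc : ∀ n : ℕ, ((n : S) + 1) * f (n + 1) =
      ∑ i ∈ Finset.range (n + 1), p i.succPNat * f (n - i)) :
    f = hOf p := by
  funext n
  induction n using Nat.strong_induction_on with
  | _ n ih =>
    cases n with
    | zero => rw [h0, hOf_zero]
    | succ n =>
      refine succ_mul_left_cancel (n := n) ?_
      rw [hsucc, succ_mul_hOf_succ]
      exact Finset.sum_congr rfl fun i _ ↦ by rw [ih (n - i) (by omega)]

lemma map_hOf {S' : Type*} [CommRing S'] [Algebra ℚ S'] (f : S →+* S') (p : ℕ+ → S) (n : ℕ) :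
    f (hOf p n) = hOf (fun k ↦ f (p k)) n := by
  refine congrFun (eq_hOf (f := fun n ↦ f (hOf p n)) (by simp [hOf_zero]) fun n ↦ ?_) n
  simpa using congrArg f (succ_mul_hOf_succ p n)

lemma hOf_pow_mul (c : S) (p : ℕ+ → S) (n : ℕ) :
    hOf (fun k ↦ c ^ (k : ℕ) * p k) n = c ^ n * hOf p n := by
  refine (congrFun (eq_hOf (f := fun n ↦ c ^ n * hOf p n) (by simp [hOf_zero]) fun n ↦ ?_) n).symm
  rw [mul_left_comm, succ_mul_hOf_succ, Finset.mul_sum]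
  refine Finset.sum_congr rfl fun i hi ↦ ?_
  have hpow : c ^ (n + 1) = c ^ (i + 1) * c ^ (n - i) := by
    rw [← pow_add]
    congr 1
    have := Finset.mem_range.1 hi
    omega
  rw [hpow, Nat.succPNat_coe, Nat.succ_eq_add_one]
  ring

/-- The generating series of `hOf p`. -/
def hSeries (p : ℕ+ → S) : PowerSeries S := PowerSeries.mk (hOf p)

/-- The logarithmic derivative of `hSeries p`. -/
def powerSumSeries (p : ℕ+ → S) : PowerSeries S := PowerSeries.mk fun n ↦ p n.succPNat

lemma derivative_hSeries (p : ℕ+ → S) :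
    PowerSeries.derivative S (hSeries p) = powerSumSeries p * hSeries p := by
  ext n
  rw [PowerSeries.coeff_derivative, PowerSeries.coeff_mul,
    Finset.Nat.sum_antidiagonal_eq_sum_range_succ_mk]
  simp only [hSeries, powerSumSeries, PowerSeries.coeff_mk]
  rw [mul_comm, succ_mul_hOf_succ]

lemma coeff_eq_hOf {p : ℕ+ → S} {Y : PowerSeries S} (h0 : PowerSeries.coeff 0 Y = 1)
    (hY : PowerSeries.derivative S Y = powerSumSeries p * Y) (n : ℕ) :
    PowerSeries.coeff n Y = hOf p n := by
  refine congrFun (eq_hOf (f := fun n ↦ PowerSeries.coeff n Y) h0 fun n ↦ ?_) n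
  have hn := congrArg (PowerSeries.coeff n) hY
  rw [PowerSeries.coeff_derivative, PowerSeries.coeff_mul,
    Finset.Nat.sum_antidiagonal_eq_sum_range_succ_mk] at hn
  simpa [powerSumSeries, mul_comm] using hn

lemma hOf_add (p r : ℕ+ → S) (n : ℕ) :
    hOf (fun k ↦ p k + r k) n = ∑ i ∈ Finset.range (n + 1), hOf p i * hOf r (n - i) := by
  rw [← coeff_eq_hOf (Y := hSeries p * hSeries r), PowerSeries.coeff_mul,
    Finset.Nat.sum_antidiagonal_eq_sum_range_succ_mk]
  · simp [hSeries]
  · simp [hSeries, PowerSeries.coeff_mul, hOf_zero]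
  · have hadd : powerSumSeries (fun k ↦ p k + r k) = powerSumSeries p + powerSumSeries r := by
      ext
      simp [powerSumSeries]
    rw [Derivation.leibniz, derivative_hSeries, derivative_hSeries, hadd]
    simp only [smul_eq_mul]
    ring

/-- These are the coefficients of `(1 - s y) / (1 - y)`. -/
lemma hOf_one_sub_pow_succ (s : S) (n : ℕ) : hOf (fun k ↦ 1 - s ^ (k : ℕ)) (n + 1) = 1 - s := by
  have h := eq_hOf (p := fun k : ℕ+ ↦ 1 - s ^ (k : ℕ)) (f := fun n ↦ if n = 0 then 1 else 1 - s)
    rfl fun n ↦ ?_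
  · simp [← h]
  have hlower : ∀ i ∈ Finset.range n,
      (1 - s ^ (i.succPNat : ℕ)) * (if n - i = 0 then 1 else 1 - s) =
        (1 - s) - s * ((1 - s) * s ^ i) := fun i hi ↦ by
    rw [if_neg (by have := Finset.mem_range.1 hi; omega), Nat.succPNat_coe,
      Nat.succ_eq_add_one]
    ring
  rw [Finset.sum_range_succ, Finset.sum_congr rfl hlower, Finset.sum_sub_distrib, ← Finset.mul_sum,
    ← Finset.mul_sum, mul_neg_geom_sum]
  simp
  ring

end NewtonRecursion

section CompleteSym

variable {R R' : Type} [CommRing R] [Algebra ℚ R] [CommRing R'] [Algebra ℚ R']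

/-- The complete homogeneous symmetric function `h_n`, over any commutative `ℚ`-algebra. -/
def completeSym (n : ℕ) : SymFn R := hOf X n

/-- The product `h_μ` of the complete homogeneous symmetric functions of the parts of `μ`. -/
def completePar (μ : Multiset ℕ+) : SymFn R := (μ.map fun a : ℕ+ ↦ completeSym (a : ℕ)).prod

/-- The coefficients of `∏ (1 - x_i y) / (1 - q x_i y)`, that is, the complete homogeneous symmetric
functions of the alphabet with power sums `-(1 - q^k) p_k`. -/
def kernelSym (q : R) (n : ℕ) : SymFn R := hOf (fun k ↦ C (-(1 - q ^ (k : ℕ))) * X k) n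

lemma completeSym_zero : completeSym 0 = (1 : SymFn R) := hOf_zero _

lemma completePar_zero : completePar 0 = (1 : SymFn R) := by simp [completePar]

lemma completePar_singleton (a : ℕ+) : completePar {a} = (completeSym a : SymFn R) := by
  simp [completePar]

lemma completePar_cons (a : ℕ+) (μ : Multiset ℕ+) :
    completePar (a ::ₘ μ) = completeSym a * (completePar μ : SymFn R) := by
  simp [completePar]

lemma completePar_add (μ ν : Multiset ℕ+) :
    completePar (μ + ν) = completePar μ * (completePar ν : SymFn R) := by
  simp [completePar]

lemma map_completeSym (f : R →+* R') (n : ℕ) :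
    MvPolynomial.map f (completeSym n) = completeSym n := by
  simp [completeSym, map_hOf]

lemma map_completePar (f : R →+* R') (μ : Multiset ℕ+) :
    MvPolynomial.map f (completePar μ) = completePar μ := by
  simp only [completePar, map_multiset_prod, Multiset.map_map, Function.comp_apply,
    map_completeSym]

lemma map_kernelSym (f : R →+* R') (q : R) (n : ℕ) :
    MvPolynomial.map f (kernelSym q n) = kernelSym (f q) n := by
  simp [kernelSym, map_hOf]

lemma hsym_eq_completeSym {K : Type} [Field K] [CharZero K] (n : ℕ) :
    hsym (R := K) n = completeSym n := by
  refine congrFun (eq_hOf (p := X) (f := hsym) (by rw [hsym]) fun n ↦ ?_) n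
  have hn : ((n : SymFn K) + 1) = C ((n : K) + 1) := by simp
  rw [hsym, hn, C_mul', smul_inv_smul₀ (Nat.cast_add_one_ne_zero n)]
  rfl

lemma sum_kernelSym_mul_completeSym (q : R) (n : ℕ) :
    ∑ i ∈ Finset.range (n + 1), kernelSym q i * completeSym (n - i) =
      C (q ^ n) * completeSym n := by
  rw [completeSym, C_pow, ← hOf_pow_mul]
  simp only [kernelSym, completeSym]
  rw [← hOf_add]
  congr 1
  funext k
  simp
  ring

end CompleteSym

section MacdonaldOperator

variable {R R' : Type} [CommRing R] [CommRing R']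

/-- Addition of an alphabet with power sums `a_k y^k`, recorded by the variable `y`: the algebra
homomorphism `p_k ↦ p_k + a_k y^k`. -/
def shift (a : ℕ+ → R) : SymFn R →ₐ[R] Polynomial (SymFn R) :=
  aeval fun k ↦ Polynomial.C (X k) + Polynomial.monomial k (C (a k))

lemma shift_X (a : ℕ+ → R) (k : ℕ+) :
    shift a (X k) = Polynomial.C (X k) + Polynomial.monomial (k : ℕ) (C (a k)) := by
  simp [shift]

lemma map_shift (f : R →+* R') (a : ℕ+ → R) (g : SymFn R) :
    (shift a g).map (MvPolynomial.map f) = shift (fun k ↦ f (a k)) (MvPolynomial.map f g) := by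
  induction g using MvPolynomial.induction_on with
  | C c => simp
  | add g g' hg hg' => simp only [map_add, Polynomial.map_add, hg, hg']
  | mul_X g k hg => simp [hg, shift_X, Polynomial.map_monomial]

lemma coeff_zero_shift (a : ℕ+ → R) (f : SymFn R) : (shift a f).coeff 0 = f := by
  induction f using MvPolynomial.induction_on with
  | C c => simp
  | add f g hf hg => rw [map_add, Polynomial.coeff_add, hf, hg]
  | mul_X f k hf => simp [hf, shift_X, Polynomial.mul_coeff_zero, Polynomial.coeff_monomial]

lemma coeff_shift_pow_mul (c : R) (a : ℕ+ → R) (g : SymFn R) (n : ℕ) :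
    (shift (fun k ↦ c ^ (k : ℕ) * a k) g).coeff n = c ^ n • (shift a g).coeff n := by
  have hcomp : shift (fun k ↦ c ^ (k : ℕ) * a k) g =
      (shift a g).comp (Polynomial.C (C c) * Polynomial.X) := by
    induction g using MvPolynomial.induction_on with
    | C c => simp
    | add g g' hg hg' => simp only [map_add, Polynomial.add_comp, hg, hg']
    | mul_X g k hg =>
      rw [map_mul, map_mul, hg, Polynomial.mul_comp, shift_X, shift_X, Polynomial.add_comp,
        Polynomial.C_comp, Polynomial.monomial_comp, mul_pow, ← Polynomial.C_pow, ← mul_assoc,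
        ← Polynomial.C_mul, Polynomial.C_mul_X_pow_eq_monomial, C_mul, C_pow, mul_comm (C (a k))]
  rw [hcomp, Polynomial.comp_C_mul_X_coeff, ← C_pow, smul_eq_C_mul, mul_comm]

variable [Algebra ℚ R] [Algebra ℚ R']

lemma shift_completeSym (a : ℕ+ → R) (n : ℕ) :
    shift a (completeSym n) = ∑ i ∈ Finset.range (n + 1),
      Polynomial.monomial i (C (hOf a i) * completeSym (n - i)) := by
  have hX : ∀ k : ℕ+, Polynomial.monomial (k : ℕ) (C (a k) : SymFn R) =
      Polynomial.X ^ (k : ℕ) * (Polynomial.C.comp C) (a k) := fun k ↦ by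
    rw [RingHom.comp_apply, Polynomial.X_pow_mul_C, Polynomial.C_mul_X_pow_eq_monomial]
  rw [completeSym, ← AlgHom.coe_toRingHom, map_hOf]
  simp only [AlgHom.coe_toRingHom, shift_X, hX, add_comm (Polynomial.C _), hOf_add, hOf_pow_mul,
    ← map_hOf]
  refine Finset.sum_congr rfl fun i _ ↦ ?_
  rw [RingHom.comp_apply, mul_assoc, ← map_mul, Polynomial.X_pow_mul_C,
    Polynomial.C_mul_X_pow_eq_monomial]
  rfl

/-- The linear map sending `y^n` to `kernelSym q n`. -/
def kernelMap (q : R) : Polynomial (SymFn R) →ₗ[SymFn R] SymFn R :=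
  Polynomial.lsum fun n ↦ LinearMap.mulRight (SymFn R) (kernelSym q n)

lemma kernelMap_monomial (q : R) (n : ℕ) (c : SymFn R) :
    kernelMap q (Polynomial.monomial n c) = c * kernelSym q n := by
  simp [kernelMap]

lemma kernelMap_C_mul (q : R) (c : SymFn R) (p : Polynomial (SymFn R)) :
    kernelMap q (Polynomial.C c * p) = c * kernelMap q p := by
  rw [← Polynomial.smul_eq_C_mul, map_smul, smul_eq_mul]

lemma map_kernelMap (f : R →+* R') (q : R) (p : Polynomial (SymFn R)) :
    MvPolynomial.map f (kernelMap q p) = kernelMap (f q) (p.map (MvPolynomial.map f)) := by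
  induction p using Polynomial.induction_on' with
  | add p r hp hr => simp only [map_add, Polynomial.map_add, hp, hr]
  | monomial n c => simp [kernelMap_monomial, Polynomial.map_monomial, map_kernelSym]

/-- Macdonald's operator: `f ↦ f[X + (1 - s) y]`, followed by the extraction of the constant term
against `∏ (1 - x_i / y) / (1 - q x_i / y)`. For `s = t⁻¹` the symmetric functions `Q'_μ` are its
eigenvectors. -/
def macOp (q s : R) : SymFn R →ₗ[R] SymFn R :=
  (kernelMap q).restrictScalars R ∘ₗ (shift fun k ↦ 1 - s ^ (k : ℕ)).toLinearMap

lemma macOp_apply (q s : R) (f : SymFn R) :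
    macOp q s f = kernelMap q (shift (fun k ↦ 1 - s ^ (k : ℕ)) f) := rfl

lemma map_macOp (f : R →+* R') (q s : R) (g : SymFn R) :
    MvPolynomial.map f (macOp q s g) = macOp (f q) (f s) (MvPolynomial.map f g) := by
  simp only [macOp_apply, map_kernelMap, map_shift, map_sub, map_one, map_pow]

lemma macOp_one (q s : R) : macOp q s 1 = 1 := by
  rw [macOp_apply, map_one, ← Polynomial.monomial_zero_one, kernelMap_monomial, kernelSym, hOf_zero,
    one_mul]

lemma macOp_completeSym_mul (q s : R) (n : ℕ) (f : SymFn R) :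
    macOp q s (completeSym n * f) = C s * completeSym n * macOp q s f +
      C (1 - s) * (shift (fun k ↦ 1 - s ^ (k : ℕ)) f).sum fun j c ↦
        c * (C (q ^ (n + j)) * completeSym (n + j) -
          ∑ i ∈ Finset.range j, kernelSym q i * completeSym (n + j - i)) := by
  rw [macOp_apply, macOp_apply, map_mul]
  generalize shift (fun k ↦ 1 - s ^ (k : ℕ)) f = p
  induction p using Polynomial.induction_on' with
  | add p r hp hr =>
    rw [mul_add, map_add, hp, hr, map_add, Polynomial.sum_add_index]
    · ring
    · simp
    · intros
      ring
  | monomial j c =>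
    have htail : ∑ i ∈ Finset.range n,
          kernelMap q (Polynomial.monomial (i + 1) (C (hOf (fun k ↦ 1 - s ^ (k : ℕ)) (i + 1)) *
            completeSym (n - (i + 1))) * Polynomial.monomial j c) =
        C (1 - s) * c * ∑ i ∈ Finset.range n, kernelSym q (j + 1 + i) *
          completeSym (n + j - (j + 1 + i)) := by
      rw [Finset.mul_sum]
      refine Finset.sum_congr rfl fun i _ ↦ ?_
      rw [Polynomial.monomial_mul_monomial, kernelMap_monomial, hOf_one_sub_pow_succ,
        show n + j - (j + 1 + i) = n - (i + 1) by omega, show j + 1 + i = i + 1 + j by ring]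
      ring
    have hsplit := sum_kernelSym_mul_completeSym q (n + j)
    rw [show n + j + 1 = j + 1 + n by ring, Finset.sum_range_add, Finset.sum_range_succ,
      Nat.add_sub_cancel] at hsplit
    rw [Polynomial.sum_monomial_index _ _ (by simp), shift_completeSym, Finset.sum_mul, map_sum,
      Finset.sum_range_succ', htail, hOf_zero, C_1, one_mul, Nat.sub_zero,
      Polynomial.monomial_mul_monomial, kernelMap_monomial, kernelMap_monomial, zero_add, C_sub,
      C_1]
    linear_combination (1 - C s) * c * hsplit

end MacdonaldOperator

section Triangularity

variable {R : Type} [CommRing R]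

lemma C_mul_mem {W : Submodule R (SymFn R)} (c : R) {f : SymFn R} (hf : f ∈ W) : C c * f ∈ W := by
  rw [← smul_eq_C_mul]
  exact W.smul_mem c hf

variable [Algebra ℚ R]

/-- The symmetric functions of degree `z`. The degree is an integer, so that lowering it needs no
side condition. -/
def degreeSpan (R : Type) [CommRing R] [Algebra ℚ R] (z : ℤ) : Submodule R (SymFn R) :=
  Submodule.span R (completePar '' {ν | (wt ν : ℤ) = z})

lemma completePar_mem_degreeSpan (ν : Multiset ℕ+) : completePar ν ∈ degreeSpan R (wt ν) :=
  Submodule.subset_span ⟨ν, rfl, rfl⟩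

lemma one_mem_degreeSpan : (1 : SymFn R) ∈ degreeSpan R 0 := by
  simpa [completePar_zero, wt_zero] using completePar_mem_degreeSpan (R := R) 0

lemma completeSym_mem_degreeSpan (n : ℕ) : completeSym n ∈ degreeSpan R n := by
  cases n with
  | zero => simpa only [completeSym_zero, Nat.cast_zero] using one_mem_degreeSpan
  | succ n =>
    simpa [completePar_singleton, wt_singleton] using
      completePar_mem_degreeSpan (R := R) {n.succPNat}

lemma mul_mem_degreeSpan {y z : ℤ} {f g : SymFn R} (hf : f ∈ degreeSpan R y)
    (hg : g ∈ degreeSpan R z) : f * g ∈ degreeSpan R (y + z) := by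
  have hmul := Submodule.mul_mem_mul hf hg
  rw [degreeSpan, degreeSpan, Submodule.span_mul_span] at hmul
  refine Submodule.span_mono ?_ hmul
  rintro _ ⟨_, ⟨μ, rfl, rfl⟩, _, ⟨ν, rfl, rfl⟩, rfl⟩
  exact ⟨μ + ν, by simp [wt_add], completePar_add μ ν⟩

lemma X_succPNat_mem_degreeSpan (n : ℕ) : X n.succPNat ∈ degreeSpan R (n + 1) := by
  induction n using Nat.strong_induction_on with
  | _ n ih =>
    have hrec := succ_mul_hOf_succ (X : ℕ+ → SymFn R) n
    rw [Finset.sum_range_succ, ← sub_eq_iff_eq_add', Nat.sub_self, hOf_zero, mul_one] at hrec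
    rw [← hrec]
    refine sub_mem ?_ (sum_mem fun i hi ↦ ?_)
    · have hC : (n : SymFn R) + 1 = C ((n : R) + 1) := by simp
      rw [hC]
      exact C_mul_mem _ (mod_cast completeSym_mem_degreeSpan (n + 1))
    · have hin := Finset.mem_range.1 hi
      change _ * completeSym (n - i) ∈ _
      convert mul_mem_degreeSpan (ih i hin) (completeSym_mem_degreeSpan (n - i)) using 2
      push_cast [hin.le]
      ring

lemma hOf_C_mul_X_mem_degreeSpan (a : ℕ+ → R) (n : ℕ) :
    hOf (fun k ↦ C (a k) * X k) n ∈ degreeSpan R n := by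
  induction n using Nat.strong_induction_on with
  | _ n ih =>
    cases n with
    | zero => simpa only [hOf_zero, Nat.cast_zero] using one_mem_degreeSpan
    | succ n =>
      rw [hOf, ← algebraMap_smul R]
      refine Submodule.smul_mem _ _ (sum_mem fun i hi ↦ ?_)
      have hin : i ≤ n := Nat.lt_succ_iff.1 (Finset.mem_range.1 hi)
      rw [mul_assoc]
      convert C_mul_mem (a i.succPNat)
        (mul_mem_degreeSpan (X_succPNat_mem_degreeSpan i) (ih (n - i) (by omega))) using 2
      push_cast [hin]
      ring

lemma kernelSym_mem_degreeSpan (q : R) (n : ℕ) : kernelSym q n ∈ degreeSpan R n :=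
  hOf_C_mul_X_mem_degreeSpan _ n

lemma degreeSpan_le_span_range_completePar (z : ℤ) :
    degreeSpan R z ≤ Submodule.span R (Set.range completePar) :=
  Submodule.span_mono (Set.image_subset_range _ _)

lemma span_range_completePar : Submodule.span R (Set.range (completePar (R := R))) = ⊤ := by
  rw [eq_top_iff]
  rintro f -
  induction f using MvPolynomial.induction_on with
  | C c =>
    rw [← mul_one (C c)]
    exact C_mul_mem _ (degreeSpan_le_span_range_completePar 0 one_mem_degreeSpan)
  | add f g hf hg => exact add_mem hf hg
  | mul_X f k hf =>
    have hk := degreeSpan_le_span_range_completePar _ (X_succPNat_mem_degreeSpan (R := R) k.natPred)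
    rw [PNat.succPNat_natPred] at hk
    have hmul := Submodule.mul_mem_mul hf hk
    rw [Submodule.span_mul_span] at hmul
    refine Submodule.span_mono ?_ hmul
    rintro _ ⟨_, ⟨μ, rfl⟩, _, ⟨ν, rfl⟩, rfl⟩
    exact ⟨μ + ν, completePar_add μ ν⟩

lemma coeff_shift_completeSym_mem_degreeSpan (a : ℕ+ → R) (n j : ℕ) :
    (shift a (completeSym n)).coeff j ∈ degreeSpan R (n - j) := by
  simp only [shift_completeSym, Polynomial.finsetSum_coeff, Polynomial.coeff_monomial]
  refine sum_mem fun i hi ↦ ?_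
  split_ifs with hij
  · subst hij
    rw [← Nat.cast_sub (Nat.lt_succ_iff.1 (Finset.mem_range.1 hi))]
    exact C_mul_mem _ (completeSym_mem_degreeSpan _)
  · exact zero_mem _

lemma coeff_shift_completePar_mem_degreeSpan (a : ℕ+ → R) (μ : Multiset ℕ+) (j : ℕ) :
    (shift a (completePar μ)).coeff j ∈ degreeSpan R (wt μ - j) := by
  induction μ using Multiset.induction generalizing j with
  | empty =>
    rw [completePar_zero, map_one, Polynomial.coeff_one, wt_zero]
    split_ifs with hj
    · simpa [hj] using one_mem_degreeSpan
    · exact zero_mem _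
  | cons n μ ih =>
    rw [completePar_cons, map_mul, Polynomial.coeff_mul]
    refine sum_mem fun x hx ↦ ?_
    rw [Finset.HasAntidiagonal.mem_antidiagonal] at hx
    convert mul_mem_degreeSpan (coeff_shift_completeSym_mem_degreeSpan a n x.1) (ih x.2) using 2
    rw [wt_cons, ← hx]
    push_cast
    ring

lemma mul_completeSym_add_mem_upperSpan {n : ℕ+} {μ : Multiset ℕ+} (hμ : ∀ a ∈ μ, a ≤ n) {k : ℕ}
    (hk : 0 < k) {f : SymFn R} (hf : f ∈ degreeSpan R (wt μ - k)) :
    f * completeSym (n + k) ∈ upperSpan R Precedes completePar (n ::ₘ μ) := by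
  lift k to ℕ+ using hk
  suffices hle : degreeSpan R (wt μ - k) ≤ (upperSpan R Precedes completePar (n ::ₘ μ)).comap
      (LinearMap.mulRight R (completeSym (n + k))) from hle hf
  refine Submodule.span_le.2 ?_
  rintro _ ⟨ν, hν, rfl⟩
  have hlt : n < n + k := PNat.lt_add_right n k
  have hmem : n ::ₘ μ ≺ (n + k) ::ₘ ν := by
    refine ⟨?_, colexKey_lt_of_forall_lt (k := n + k) ?_ (by simp)⟩
    · have hwt : (wt ν : ℤ) = wt μ - k := hν
      simp only [wt_cons, PNat.add_coe]
      omega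
    · exact Multiset.forall_mem_cons.2 ⟨hlt, fun a ha ↦ (hμ a ha).trans_lt hlt⟩
  simpa [completePar_cons, mul_comm] using mem_upperSpan (S := R) (b := completePar) hmem

lemma mul_sub_sum_kernelSym_mem_upperSpan (q : R) {n : ℕ+} {μ : Multiset ℕ+}
    (hμ : ∀ a ∈ μ, a ≤ n) {k : ℕ} (hk : 0 < k) {f : SymFn R} (hf : f ∈ degreeSpan R (wt μ - k)) :
    f * (C (q ^ (n + k)) * completeSym (n + k) -
        ∑ i ∈ Finset.range k, kernelSym q i * completeSym (n + k - i)) ∈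
      upperSpan R Precedes completePar (n ::ₘ μ) := by
  rw [mul_sub, mul_left_comm, Finset.mul_sum]
  refine sub_mem (C_mul_mem _ (mul_completeSym_add_mem_upperSpan hμ hk hf))
    (sum_mem fun i hi ↦ ?_)
  have hik := Finset.mem_range.1 hi
  rw [← mul_assoc, Nat.add_sub_assoc hik.le]
  refine mul_completeSym_add_mem_upperSpan hμ (Nat.sub_pos_of_lt hik) ?_
  convert mul_mem_degreeSpan hf (kernelSym_mem_degreeSpan q i) using 2
  push_cast [hik.le]
  ring

lemma completePar_mul_mem_upperSpan {μ : Multiset ℕ+} (ν : Multiset ℕ+) {f : SymFn R}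
    (hf : f ∈ upperSpan R Precedes completePar μ) :
    completePar ν * f ∈ upperSpan R Precedes completePar (ν + μ) := by
  refine map_mem_of_mem_upperSpan (f := LinearMap.mulLeft R (completePar ν)) (fun ρ hρ ↦ ?_) hf
  rw [LinearMap.mulLeft_apply, ← completePar_add]
  exact mem_upperSpan ((add_precedes_add_left ν).2 hρ)

theorem isTriangular_macOp_completePar (q s : R) :
    IsTriangular Precedes completePar (macOp q s) (eig q s) := by
  intro μ
  induction μ using maxPartInduction with
  | zero => simp [completePar_zero, macOp_one, eig_zero]
  | cons n μ hn ih =>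
    set p := shift (fun k ↦ 1 - s ^ (k : ℕ)) (completePar μ)
    have hp : ∀ j : ℕ, p.coeff j ∈ degreeSpan R (wt μ - j) :=
      coeff_shift_completePar_mem_degreeSpan _ μ
    set tail : ℕ → SymFn R := fun j ↦ p.coeff j * (C (q ^ (n + j)) * completeSym (n + j) -
      ∑ i ∈ Finset.range j, kernelSym q i * completeSym (n + j - i))
    have htail : ∀ j, 0 < j → tail j ∈ upperSpan R Precedes completePar (n ::ₘ μ) :=
      fun j hj ↦ mul_sub_sum_kernelSym_mem_upperSpan q hn hj (hp j)
    have htail_zero : tail 0 = C (q ^ (n : ℕ)) * (completeSym n * completePar μ) := by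
      simp only [tail, p, coeff_zero_shift, Finset.sum_range_zero, sub_zero, add_zero]
      ring
    have hsplit : macOp q s (completePar (n ::ₘ μ)) -
          eig q s (n ::ₘ μ) • completePar (n ::ₘ μ) =
        C s * (completePar {n} * (macOp q s (completePar μ) - eig q s μ • completePar μ)) +
          C (1 - s) * ∑ j ∈ Finset.range p.natDegree, tail (j + 1) := by
      rw [completePar_cons, macOp_completeSym_mul, Polynomial.sum_over_range _ (by simp),
        Finset.sum_range_succ', eig_cons q s hn, completePar_singleton]
      change _ + C (1 - s) * (∑ j ∈ Finset.range p.natDegree, tail (j + 1) + tail 0) - _ = _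
      rw [htail_zero]
      simp only [smul_eq_C_mul, map_add, map_mul, map_sub, map_one]
      ring
    rw [hsplit]
    refine add_mem (C_mul_mem _ ?_) (C_mul_mem _ (sum_mem fun j _ ↦ htail _ j.succ_pos))
    rw [← Multiset.singleton_add]
    exact completePar_mul_mem_upperSpan _ ih

end Triangularity

section Pairing

variable {R : Type} [CommRing R]

/-- The deformed weight `z_λ ∏ c_{λ_i}` of the partition with multiplicity function `m`. -/
def pairingWeight (c : ℕ+ → R) (m : ℕ+ →₀ ℕ) : R :=
  m.prod fun k j ↦ (j.factorial : R) * ((k : ℕ) : R) ^ j * c k ^ j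

/-- The bilinear form on symmetric functions for which the power sum products are orthogonal, with
squared norms `pairingWeight c`. -/
def pairing (c : ℕ+ → R) : SymFn R →ₗ[R] SymFn R →ₗ[R] R :=
  (basisMonomials ℕ+ R).constr R fun m ↦ pairingWeight c m • lcoeff R m

lemma pairing_apply (c : ℕ+ → R) (f g : SymFn R) :
    pairing c f g = ∑ m ∈ f.support, coeff m f * coeff m g * pairingWeight c m := by
  rw [pairing, Module.Basis.constr_apply, Finsupp.sum, LinearMap.sum_apply]
  refine Finset.sum_congr rfl fun m _ ↦ ?_
  simp only [LinearMap.smul_apply, lcoeff_apply, smul_eq_mul]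
  change coeff m f * _ = _
  ring

lemma pairing_monomial_left (c : ℕ+ → R) (m : ℕ+ →₀ ℕ) (a : R) (g : SymFn R) :
    pairing c (monomial m a) g = a * coeff m g * pairingWeight c m := by
  classical
  rw [pairing_apply, Finset.sum_subset support_monomial_subset]
  · simp
  · intro n _ hn
    simp [notMem_support_iff.1 hn]

lemma pairing_comm (c : ℕ+ → R) (f g : SymFn R) : pairing c f g = pairing c g f := by
  classical
  induction f using MvPolynomial.induction_on' with
  | add f f' hf hf' => simp only [map_add, LinearMap.add_apply, hf, hf']
  | monomial m a =>
    induction g using MvPolynomial.induction_on' with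
    | add g g' hg hg' => simp only [map_add, LinearMap.add_apply, hg, hg']
    | monomial n b =>
      simp only [pairing_monomial_left, coeff_monomial]
      split_ifs <;> grind

lemma pairing_C_mul_left (c : ℕ+ → R) (b : R) (f g : SymFn R) :
    pairing c (C b * f) g = b * pairing c f g := by
  rw [← smul_eq_C_mul, map_smul, LinearMap.smul_apply, smul_eq_mul]

lemma pairing_C_mul_right (c : ℕ+ → R) (b : R) (f g : SymFn R) :
    pairing c f (C b * g) = b * pairing c f g := by
  rw [← smul_eq_C_mul, map_smul, smul_eq_mul]

lemma pairing_one_one (c : ℕ+ → R) : pairing c 1 1 = 1 := by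
  have h := pairing_monomial_left c 0 1 1
  simpa [pairingWeight] using h

lemma pairingWeight_single_add (c : ℕ+ → R) (k : ℕ+) (m : ℕ+ →₀ ℕ) :
    pairingWeight c (Finsupp.single k 1 + m) =
      ((m k : R) + 1) * ((k : ℕ) : R) * c k * pairingWeight c m := by
  classical
  have herase : (Finsupp.single k 1 + m).erase k = m.erase k := by
    ext j
    by_cases hj : j = k
    · simp [hj]
    · simp [Finsupp.erase_ne hj]
  have hone : ∀ j : ℕ+, ((Nat.factorial 0 : ℕ) : R) * ((j : ℕ) : R) ^ 0 * c j ^ 0 = 1 := by simp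
  rw [pairingWeight, pairingWeight, ← Finsupp.mul_prod_erase' _ k _ fun j ↦ hone j,
    ← Finsupp.mul_prod_erase' m k _ fun j ↦ hone j, herase, Finsupp.add_apply,
    Finsupp.single_eq_same, add_comm 1, Nat.factorial_succ]
  push_cast
  ring

lemma pairing_X_mul (c : ℕ+ → R) (k : ℕ+) (f g : SymFn R) :
    pairing c (X k * f) g = ((k : ℕ) : R) * c k * pairing c f (pderiv k g) := by
  induction f using MvPolynomial.induction_on' with
  | add f f' hf hf' => simp only [mul_add, map_add, LinearMap.add_apply, hf, hf']
  | monomial m a =>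
    rw [X, monomial_mul, one_mul, pairing_monomial_left, pairing_monomial_left, coeff_pderiv,
      pairingWeight_single_add, add_comm m]
    ring

lemma X_pow_dvd_derivative_shift_X_sub (b : ℕ+ → R) (k : ℕ+) (N : ℕ) :
    Polynomial.X ^ N ∣ Polynomial.derivative (shift b (X k)) -
      ∑ i ∈ Finset.range N, Polynomial.monomial i (C (((i : R) + 1) * b i.succPNat)) *
        shift b (pderiv i.succPNat (X k)) := by
  obtain ⟨j, rfl⟩ : ∃ j : ℕ, j.succPNat = k := ⟨k.natPred, PNat.succPNat_natPred k⟩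
  have hderiv : Polynomial.derivative (shift b (X j.succPNat)) =
      Polynomial.monomial j (C (((j : R) + 1) * b j.succPNat)) := by
    simp [shift_X, mul_comm]
  have hterm : ∀ i, i ≠ j → Polynomial.monomial i (C (((i : R) + 1) * b i.succPNat)) *
      shift b (pderiv i.succPNat (X j.succPNat)) = 0 := fun i hi ↦ by
    rw [pderiv_X_of_ne (Nat.succPNat_injective.ne hi.symm), map_zero, mul_zero]
  rw [hderiv]
  by_cases hj : j < N
  · rw [Finset.sum_eq_single_of_mem j (Finset.mem_range.2 hj) fun i _ hi ↦ hterm i hi,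
      pderiv_X_self, map_one, mul_one, sub_self]
    exact dvd_zero _
  · rw [Finset.sum_eq_zero fun i hi ↦ hterm i (by have := Finset.mem_range.1 hi; omega), sub_zero,
      ← Polynomial.C_mul_X_pow_eq_monomial]
    exact (pow_dvd_pow _ (not_lt.1 hj)).mul_left _

lemma X_pow_dvd_derivative_shift_sub (b : ℕ+ → R) (g : SymFn R) (N : ℕ) :
    Polynomial.X ^ N ∣ Polynomial.derivative (shift b g) -
      ∑ i ∈ Finset.range N, Polynomial.monomial i (C (((i : R) + 1) * b i.succPNat)) *
        shift b (pderiv i.succPNat g) := by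
  induction g using MvPolynomial.induction_on with
  | C r => simp
  | add g g' hg hg' =>
    convert dvd_add hg hg' using 1
    simp only [map_add, mul_add, Finset.sum_add_distrib]
    ring
  | mul_X g k hg =>
    have hsum (c : ℕ → Polynomial (SymFn R)) : ∑ i ∈ Finset.range N,
        c i * shift b (pderiv i.succPNat (g * X k)) =
          shift b (X k) * ∑ i ∈ Finset.range N, c i * shift b (pderiv i.succPNat g) +
          shift b g * ∑ i ∈ Finset.range N, c i * shift b (pderiv i.succPNat (X k)) := by
      rw [Finset.mul_sum, Finset.mul_sum, ← Finset.sum_add_distrib]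
      refine Finset.sum_congr rfl fun i _ ↦ ?_
      rw [Derivation.leibniz, map_add, smul_eq_mul, smul_eq_mul, map_mul, map_mul]
      ring
    convert dvd_add (hg.mul_left (shift b (X k)))
      ((X_pow_dvd_derivative_shift_X_sub b k N).mul_left (shift b g)) using 1
    rw [hsum, map_mul, Polynomial.derivative_mul]
    ring

lemma succ_mul_coeff_succ_shift (b : ℕ+ → R) (g : SymFn R) (n : ℕ) :
    C ((n : R) + 1) * (shift b g).coeff (n + 1) = ∑ i ∈ Finset.range (n + 1),
      C (((i : R) + 1) * b i.succPNat) * (shift b (pderiv i.succPNat g)).coeff (n - i) := by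
  have h := Polynomial.X_pow_dvd_iff.1 (X_pow_dvd_derivative_shift_sub b g (n + 1)) n n.lt_succ_self
  rw [Polynomial.coeff_sub, sub_eq_zero, Polynomial.coeff_derivative, Polynomial.finsetSum_coeff]
    at h
  rw [mul_comm, map_add, map_one, map_natCast, h]
  refine Finset.sum_congr rfl fun i hi ↦ ?_
  obtain ⟨d, rfl⟩ := Nat.exists_eq_add_of_le' (Finset.mem_range_succ_iff.1 hi)
  rw [Polynomial.coeff_monomial_mul, Nat.add_sub_cancel]

variable [Algebra ℚ R]

lemma pairing_hOf_mul (c a : ℕ+ → R) (n : ℕ) (f g : SymFn R) :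
    pairing c (hOf (fun k ↦ C (a k) * X k) n * f) g =
      pairing c f ((shift (fun k ↦ a k * c k) g).coeff n) := by
  induction n using Nat.strong_induction_on generalizing g with
  | _ n ih =>
    cases n with
    | zero => rw [hOf_zero, one_mul, coeff_zero_shift]
    | succ n =>
      refine succ_mul_left_cancel (n := n) ?_
      rw [← pairing_C_mul_left, ← pairing_C_mul_right, succ_mul_coeff_succ_shift, ← mul_assoc,
        map_add, map_natCast, map_one, succ_mul_hOf_succ, Finset.sum_mul, map_sum, map_sum,
        LinearMap.sum_apply]
      refine Finset.sum_congr rfl fun i _ ↦ ?_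
      rw [mul_assoc, mul_assoc, pairing_C_mul_left, pairing_C_mul_right, pairing_X_mul,
        ih (n - i) (by omega), Nat.succPNat_coe, Nat.cast_succ]
      ring

/-- The factors `t^j` make the right-hand side symmetric in `f` and `g`. -/
lemma pairing_macOp_left {c : ℕ+ → R} {q s t : R} (hst : s * t = 1)
    (hc : ∀ k : ℕ+, (1 - q ^ (k : ℕ)) * c k = 1 - t ^ (k : ℕ)) (f g : SymFn R) {N : ℕ}
    (hN : (shift (fun k ↦ 1 - s ^ (k : ℕ)) f).natDegree < N) :
    pairing c (macOp q s f) g = ∑ j ∈ Finset.range N,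
      t ^ j * pairing c ((shift (fun k ↦ 1 - s ^ (k : ℕ)) f).coeff j)
        ((shift (fun k ↦ 1 - s ^ (k : ℕ)) g).coeff j) := by
  have ha : (fun k : ℕ+ ↦ -(1 - q ^ (k : ℕ)) * c k) =
      fun k : ℕ+ ↦ t ^ (k : ℕ) * (1 - s ^ (k : ℕ)) := by
    funext k
    rw [neg_mul, hc, mul_sub, ← mul_pow, mul_comm t, hst]
    simp
  have hterm : ∀ j, pairing c ((shift (fun k ↦ 1 - s ^ (k : ℕ)) f).coeff j * kernelSym q j) g =
      t ^ j * pairing c ((shift (fun k ↦ 1 - s ^ (k : ℕ)) f).coeff j)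
        ((shift (fun k ↦ 1 - s ^ (k : ℕ)) g).coeff j) := fun j ↦ by
    rw [mul_comm, kernelSym, pairing_hOf_mul, ha, coeff_shift_pow_mul, map_smul, smul_eq_mul]
  rw [macOp_apply, Polynomial.as_sum_range' _ N hN]
  simp only [map_sum, kernelMap_monomial, LinearMap.sum_apply, hterm]
  rw [← Polynomial.as_sum_range' _ N hN]

theorem pairing_macOp_comm {c : ℕ+ → R} {q s t : R} (hst : s * t = 1)
    (hc : ∀ k : ℕ+, (1 - q ^ (k : ℕ)) * c k = 1 - t ^ (k : ℕ)) (f g : SymFn R) :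
    pairing c (macOp q s f) g = pairing c f (macOp q s g) := by
  obtain ⟨N, hN⟩ := exists_gt (max (shift (fun k ↦ 1 - s ^ (k : ℕ)) f).natDegree
    (shift (fun k ↦ 1 - s ^ (k : ℕ)) g).natDegree)
  rw [pairing_macOp_left hst hc f g ((le_max_left _ _).trans_lt hN), pairing_comm c f,
    pairing_macOp_left hst hc g f ((le_max_right _ _).trans_lt hN)]
  exact Finset.sum_congr rfl fun j _ ↦ by rw [pairing_comm]

/-- The pairing for which the power sum products have squared norm `z_λ`. -/
def hallPairing (R : Type) [CommRing R] : SymFn R →ₗ[R] SymFn R →ₗ[R] R := pairing fun _ ↦ 1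

lemma hallPairing_completeSym_mul (n : ℕ) (f g : SymFn R) :
    hallPairing R (completeSym n * f) g = hallPairing R f ((shift (fun _ ↦ 1) g).coeff n) := by
  simpa [hallPairing, completeSym] using pairing_hOf_mul (fun _ ↦ (1 : R)) (fun _ ↦ 1) n f g

lemma hOf_one (n : ℕ) : hOf (fun _ ↦ (1 : R)) n = 1 := by
  cases n with
  | zero => exact hOf_zero _
  | succ n => simpa using hOf_one_sub_pow_succ (0 : R) n

end Pairing

section Schur

variable {K : Type} [Field K]

/-- The Jacobi–Trudi determinant of size `N` for the sequence of row lengths `v`. -/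
def jacobiTrudi (N : ℕ) (v : ℕ → ℕ) : SymFn K :=
  (Matrix.of fun i j : Fin N ↦ hInt (R := K) ((v i : ℤ) + (j : ℤ) - (i : ℤ))).det

lemma schur_zero : schur 0 = (1 : SymFn K) := Matrix.det_isEmpty (n := Fin 0)

lemma schur_cons_of_forall_le {a : ℕ+} {μ : Multiset ℕ+} (ha : ∀ b ∈ μ, b ≤ a) :
    schur (a ::ₘ μ) = (jacobiTrudi (Multiset.card μ + 1)
      fun i ↦ ((a : ℕ) :: descParts μ).getD i 0 : SymFn K) := by
  rw [← descParts_cons ha, ← Multiset.card_cons a μ]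
  rfl

lemma hInt_of_neg {z : ℤ} (hz : z < 0) : hInt z = (0 : SymFn K) := if_neg hz.not_ge

variable [CharZero K]

lemma hInt_natCast (n : ℕ) : hInt n = (completeSym n : SymFn K) := by
  rw [hInt, if_pos (Int.natCast_nonneg n), Int.toNat_natCast, hsym_eq_completeSym]

lemma hInt_zero : hInt 0 = (1 : SymFn K) := by
  rw [← Nat.cast_zero, hInt_natCast, completeSym_zero]

lemma coeff_shift_one_hInt (n : ℕ) (z : ℤ) :
    (shift (fun _ ↦ (1 : K)) (hInt z)).coeff n = hInt (z - n) := by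
  obtain hz | hz := lt_or_ge z 0
  · rw [hInt_of_neg hz, hInt_of_neg (by omega), map_zero, Polynomial.coeff_zero]
  · lift z to ℕ using hz
    simp only [hInt_natCast, shift_completeSym, hOf_one, C_1, one_mul, Polynomial.finsetSum_coeff,
      Polynomial.coeff_monomial, Finset.sum_ite_eq', Finset.mem_range_succ_iff]
    split_ifs with hn
    · rw [← Nat.cast_sub hn, hInt_natCast]
    · rw [hInt_of_neg (by omega)]

lemma shift_one_hInt (z : ℤ) : shift (fun _ ↦ (1 : K)) (hInt z) =
    Polynomial.C (hInt z) + Polynomial.X * shift (fun _ ↦ (1 : K)) (hInt (z - 1)) := by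
  ext1 n
  cases n with
  | zero => simp [coeff_shift_one_hInt]
  | succ n =>
    rw [Polynomial.coeff_add, Polynomial.coeff_C_succ, zero_add, Polynomial.coeff_X_mul,
      coeff_shift_one_hInt, coeff_shift_one_hInt]
    congr 1
    push_cast
    ring

/-- Subtracting `y` times each column from the next one removes `y` from all columns but the
first. -/
lemma shift_one_jacobiTrudi (N : ℕ) (v : ℕ → ℕ) :
    shift (fun _ ↦ (1 : K)) (jacobiTrudi (N + 1) v) = (Matrix.of fun i j : Fin (N + 1) ↦
      if j = 0 then shift (fun _ ↦ (1 : K)) (hInt ((v i : ℤ) + (j : ℤ) - (i : ℤ)))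
      else Polynomial.C (hInt ((v i : ℤ) + (j : ℤ) - (i : ℤ)))).det := by
  rw [jacobiTrudi, AlgHom.map_det]
  refine Matrix.det_eq_of_forall_col_eq_smul_add_pred (fun _ ↦ Polynomial.X) (fun i ↦ ?_)
    fun i j ↦ ?_
  · simp
  · rw [Matrix.of_apply, if_neg (Fin.succ_ne_zero j), AlgHom.mapMatrix_apply, Matrix.map_apply,
      Matrix.map_apply, Matrix.of_apply, Matrix.of_apply, shift_one_hInt]
    congr 4
    simp
    ring

lemma coeff_shift_one_jacobiTrudi_eq_sum (N : ℕ) (v : ℕ → ℕ) (n : ℕ) :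
    (shift (fun _ ↦ (1 : K)) (jacobiTrudi (N + 1) v)).coeff n = ∑ i : Fin (N + 1),
      (-1) ^ (i : ℕ) * hInt ((v i : ℤ) - i - n) * (Matrix.of fun a b : Fin N ↦
        hInt ((v (i.succAbove a) : ℤ) + (b.succ : ℕ) - (i.succAbove a : ℕ))).det := by
  rw [shift_one_jacobiTrudi, Matrix.det_succ_column_zero, Polynomial.finsetSum_coeff]
  refine Finset.sum_congr rfl fun i _ ↦ ?_
  calc
    _ = (Polynomial.C ((-1) ^ (i : ℕ)) * shift (fun _ ↦ (1 : K)) (hInt ((v i : ℤ) + 0 - i)) *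
          Polynomial.C (Matrix.of fun a b : Fin N ↦ hInt ((v (i.succAbove a) : ℤ) +
            (b.succ : ℕ) - (i.succAbove a : ℕ))).det).coeff n := by
      rw [RingHom.map_det, map_pow, map_neg, map_one]
      rfl
    _ = _ := by
      rw [Polynomial.coeff_mul_C, Polynomial.coeff_C_mul, coeff_shift_one_hInt, add_zero]

lemma coeff_shift_one_jacobiTrudi (N : ℕ) {v : ℕ → ℕ} {n : ℕ} (hv : ∀ i, v (i + 1) ≤ v 0)
    (hn : v 0 ≤ n) : (shift (fun _ ↦ (1 : K)) (jacobiTrudi (N + 1) v)).coeff n =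
      if n = v 0 then jacobiTrudi N fun i ↦ v (i + 1) else 0 := by
  rw [coeff_shift_one_jacobiTrudi_eq_sum, Fin.sum_univ_succ, Finset.sum_eq_zero, add_zero]
  · split_ifs with h
    · subst h
      simp [hInt_zero, jacobiTrudi, add_sub_add_right_eq_sub, ← add_assoc]
    · rw [hInt_of_neg (by simp; omega), mul_zero, zero_mul]
  · intro i _
    have := hv i
    rw [hInt_of_neg (by simp; omega), mul_zero, zero_mul]

lemma coeff_shift_one_schur_cons {a : ℕ+} {μ : Multiset ℕ+} (ha : ∀ b ∈ μ, b ≤ a) {n : ℕ}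
    (hn : (a : ℕ) ≤ n) : (shift (fun _ ↦ (1 : K)) (schur (a ::ₘ μ))).coeff n =
      if n = a then schur μ else 0 := by
  rw [schur_cons_of_forall_le ha, coeff_shift_one_jacobiTrudi _ _ hn]
  · rfl
  · intro i
    rw [List.getD_cons_succ, List.getD_cons_zero]
    obtain hi | hi := lt_or_ge i (descParts μ).length
    · rw [List.getD_eq_getElem _ _ hi]
      have hmem := List.getElem_mem hi
      simp only [descParts, List.mem_reverse, Multiset.mem_sort, Multiset.mem_map] at hmem
      obtain ⟨b, hb, hba⟩ := hmem
      exact hba.symm.trans_le (ha b hb)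
    · rw [List.getD_eq_default _ _ hi]
      exact Nat.zero_le _

lemma hallPairing_completePar_schur {μ ν : Multiset ℕ+} (h : colexKey μ ≤ colexKey ν) :
    hallPairing K (completePar ν) (schur μ) = if μ = ν then 1 else 0 := by
  induction ν using maxPartInduction generalizing μ with
  | zero =>
    obtain rfl : μ = 0 := not_not.1 fun hμ ↦ h.not_gt (colexKey_zero_lt hμ)
    rw [completePar_zero, schur_zero, hallPairing, pairing_one_one, if_pos rfl]
  | cons a ν ha ih =>
    rw [completePar_cons, hallPairing_completeSym_mul]
    induction μ using maxPartInduction with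
    | zero => simp [schur_zero, Polynomial.coeff_one]
    | cons b μ hb _ =>
      obtain hba | rfl | hab := lt_trichotomy b a
      · have hne : b ::ₘ μ ≠ a ::ₘ ν := fun heq ↦ by
          have hmem : a ∈ b ::ₘ μ := heq ▸ Multiset.mem_cons_self a ν
          obtain rfl | haμ := Multiset.mem_cons.1 hmem
          · exact lt_irrefl _ hba
          · exact (hb a haμ).not_gt hba
        rw [coeff_shift_one_schur_cons hb (PNat.coe_le_coe _ _ |>.2 hba.le),
          if_neg (PNat.coe_injective.ne hba.ne'), map_zero, if_neg hne]
      · have hle : colexKey μ ≤ colexKey ν := by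
          simpa only [← Multiset.singleton_add, not_lt, colexKey_add, add_le_add_iff_left] using h
        rw [coeff_shift_one_schur_cons hb le_rfl, if_pos rfl, ih hle]
        simp only [Multiset.cons_inj_right]
      · refine absurd h (colexKey_lt_of_forall_lt (k := b) (fun c hc ↦ ?_)
          (Multiset.mem_cons_self b μ)).not_ge
        obtain rfl | hc := Multiset.mem_cons.1 hc
        · exact hab
        · exact (ha c hc).trans_lt hab

end Schur

section Macdonald

variable {K : Type} [Field K]

/-- The factors `(1 - q^k) / (1 - t^k)` by which Macdonald's scalar product deforms Hall's. -/
def qtRatio (q t : K) (k : ℕ+) : K := (1 - q ^ (k : ℕ)) / (1 - t ^ (k : ℕ))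

lemma innerQT_eq_pairing (q t : K) (f g : SymFn K) :
    innerQT q t f g = pairing (qtRatio q t) f g := by
  rw [pairing_apply]
  rfl

lemma pairingWeight_mul (c γ : ℕ+ → K) (m : ℕ+ →₀ ℕ) :
    pairingWeight (fun k ↦ c k * γ k) m = (m.prod fun k j ↦ γ k ^ j) * pairingWeight c m := by
  rw [pairingWeight, pairingWeight, ← Finsupp.prod_mul]
  exact Finsupp.prod_congr fun k _ ↦ by ring

lemma pairing_scaleHom (c γ : ℕ+ → K) (f g : SymFn K) :
    pairing c (scaleHom γ f) g = pairing (fun k ↦ c k * γ k) f g := by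
  induction f using MvPolynomial.induction_on' with
  | add f f' hf hf' => simp only [map_add, LinearMap.add_apply, hf, hf']
  | monomial m a =>
    have hscale : scaleHom γ (monomial m a) = monomial m (a * m.prod fun k j ↦ γ k ^ j) := by
      rw [scaleHom, aeval_monomial, monomial_eq (a := a * _)]
      simp only [mul_pow, ← C_pow, Finsupp.prod, Finset.prod_mul_distrib, C_mul, map_prod,
        algebraMap_eq, mul_assoc]
    rw [hscale, pairing_monomial_left, pairing_monomial_left, pairingWeight_mul]
    ring

lemma hallPairing_scaleHom (q t : K) (f g : SymFn K) :
    hallPairing K (scaleHom (qtRatio q t) f) g = innerQT q t f g := by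
  simp only [hallPairing, pairing_scaleHom, one_mul, innerQT_eq_pairing]

lemma hallPairing_comm (f g : SymFn K) : hallPairing K f g = hallPairing K g f :=
  pairing_comm _ f g

variable {q t : K}

/-- Here `qtRatio t q` is the inverse of the factor `qtRatio q t` by which `f` is scaled. -/
lemma pairing_scaleHom_eq_hallPairing (hq : ∀ k : ℕ+, 1 - q ^ (k : ℕ) ≠ 0)
    (ht : ∀ k : ℕ+, 1 - t ^ (k : ℕ) ≠ 0) (f g : SymFn K) :
    pairing (qtRatio t q) (scaleHom (qtRatio q t) f) g = hallPairing K f g := by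
  have hinv : (fun k ↦ qtRatio t q k * qtRatio q t k) = fun _ ↦ 1 := by
    funext k
    rw [qtRatio, qtRatio, div_mul_div_cancel₀ (hq k), div_self (ht k)]
  rw [pairing_scaleHom, hallPairing, hinv]

variable {P : Multiset ℕ+ → SymFn K}

lemma Qprime_eq_smul (μ : Multiset ℕ+) :
    Qprime q t P μ = (innerQT q t (P μ) (P μ))⁻¹ • scaleHom (qtRatio q t) (P μ) := by
  rw [Qprime, Qfam, map_smul]
  rfl

variable [CharZero K]

lemma hallPairing_completePar_macdonald (hP : IsMacdonaldBasis q t P) {μ ν : Multiset ℕ+}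
    (h : colexKey μ ≤ colexKey ν) :
    hallPairing K (P μ) (completePar ν) = if μ = ν then 1 else 0 := by
  have hle : Submodule.span K (schur '' {ρ | StrictDom ρ μ}) ≤
      LinearMap.ker (hallPairing K (completePar ν)) := by
    rw [Submodule.span_le]
    rintro _ ⟨ρ, hρ, rfl⟩
    have hlt := (colexKey_lt_of_strictDom hρ).trans_le h
    exact (hallPairing_completePar_schur hlt.le).trans (if_neg (ne_of_apply_ne colexKey hlt.ne))
  have hsub := hle (hP.1 μ)
  rw [LinearMap.mem_ker, map_sub, sub_eq_zero] at hsub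
  rw [hallPairing_comm, hsub, hallPairing_completePar_schur h]

lemma hallPairing_completePar_macdonald_of_lt (hP : IsMacdonaldBasis q t P) {μ ν : Multiset ℕ+}
    (h : colexKey μ < colexKey ν) : hallPairing K (P μ) (completePar ν) = 0 :=
  (hallPairing_completePar_macdonald hP h.le).trans (if_neg (ne_of_apply_ne colexKey h.ne))

lemma hallPairing_completePar_macdonald_self (hP : IsMacdonaldBasis q t P) (μ : Multiset ℕ+) :
    hallPairing K (P μ) (completePar μ) = 1 :=
  (hallPairing_completePar_macdonald hP le_rfl).trans (if_pos rfl)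

lemma eq_zero_of_forall_hallPairing_macdonald (hP : IsMacdonaldBasis q t P) {f : SymFn K}
    (hf : ∀ μ, hallPairing K (P μ) f = 0) : f = 0 :=
  eq_zero_of_forall_dual_eq_zero (φ := fun μ ↦ hallPairing K (P μ)) colexKey_injective
    (hallPairing_completePar_macdonald_self hP)
    (fun _ _ ↦ hallPairing_completePar_macdonald_of_lt hP) span_range_completePar hf

lemma innerQT_self_ne_zero (hq : ∀ k : ℕ+, 1 - q ^ (k : ℕ) ≠ 0)
    (ht : ∀ k : ℕ+, 1 - t ^ (k : ℕ) ≠ 0) (hP : IsMacdonaldBasis q t P) (μ : Multiset ℕ+) :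
    innerQT q t (P μ) (P μ) ≠ 0 := fun h ↦ by
  have hscale : scaleHom (qtRatio q t) (P μ) = 0 :=
    eq_zero_of_forall_hallPairing_macdonald hP fun ν ↦ by
      rw [hallPairing_comm, hallPairing_scaleHom]
      obtain rfl | hne := eq_or_ne μ ν
      exacts [h, hP.2 μ ν hne]
  have hone := hallPairing_completePar_macdonald_self hP μ
  rw [← pairing_scaleHom_eq_hallPairing hq ht, hscale,
    map_zero, LinearMap.zero_apply] at hone
  exact zero_ne_one hone

lemma hallPairing_Qprime (hq : ∀ k : ℕ+, 1 - q ^ (k : ℕ) ≠ 0) (ht : ∀ k : ℕ+, 1 - t ^ (k : ℕ) ≠ 0)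
    (hP : IsMacdonaldBasis q t P) (μ ν : Multiset ℕ+) :
    hallPairing K (P ν) (Qprime q t P μ) = if μ = ν then 1 else 0 := by
  rw [hallPairing_comm, Qprime_eq_smul, map_smul, LinearMap.smul_apply, hallPairing_scaleHom,
    smul_eq_mul]
  split_ifs with h
  · rw [← h, inv_mul_cancel₀ (innerQT_self_ne_zero hq ht hP μ)]
  · rw [hP.2 μ ν h, mul_zero]

lemma Qprime_sub_completePar_mem (hq : ∀ k : ℕ+, 1 - q ^ (k : ℕ) ≠ 0)
    (ht : ∀ k : ℕ+, 1 - t ^ (k : ℕ) ≠ 0) (hP : IsMacdonaldBasis q t P) (μ : Multiset ℕ+) :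
    Qprime q t P μ - completePar μ ∈
      upperSpan K (fun ν ρ ↦ colexKey ν < colexKey ρ) completePar μ := by
  have h := sub_smul_mem_upperSpan_of_forall_dual_eq_zero (i := μ) (x := Qprime q t P μ)
    (φ := fun μ ↦ hallPairing K (P μ)) colexKey_injective
    (hallPairing_completePar_macdonald_self hP)
    (fun _ _ ↦ hallPairing_completePar_macdonald_of_lt hP) span_range_completePar
    fun ν hν ↦ (hallPairing_Qprime hq ht hP μ ν).trans (if_neg hν.symm)
  rwa [hallPairing_Qprime hq ht hP, if_pos rfl, one_smul] at h

lemma hallPairing_macOp_Qprime_of_le (hq : ∀ k : ℕ+, 1 - q ^ (k : ℕ) ≠ 0)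
    (ht : ∀ k : ℕ+, 1 - t ^ (k : ℕ) ≠ 0) (hP : IsMacdonaldBasis q t P) (s : K) {μ ν : Multiset ℕ+}
    (h : colexKey ν ≤ colexKey μ) :
    hallPairing K (P ν) (macOp q s (Qprime q t P μ)) = if μ = ν then eig q s μ else 0 := by
  have : IsTrans (Multiset ℕ+) fun ν ρ ↦ colexKey ν < colexKey ρ := ⟨fun _ _ _ ↦ lt_trans⟩
  have htri : IsTriangular (fun ν ρ ↦ colexKey ν < colexKey ρ) completePar (macOp q s) (eig q s) :=
    fun ρ ↦ upperSpan_mono_rel (fun _ hρ ↦ hρ.2) (isTriangular_macOp_completePar q s ρ)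
  have hzero := map_mem_of_mem_upperSpan (N := ⊥) (f := hallPairing K (P ν))
    (fun ρ hρ ↦ hallPairing_completePar_macdonald_of_lt hP (h.trans_lt hρ))
    (htri.sub_smul_mem (Qprime_sub_completePar_mem hq ht hP μ))
  rw [Submodule.mem_bot, map_sub, map_smul, sub_eq_zero, hallPairing_Qprime hq ht hP] at hzero
  rw [hzero, smul_ite, smul_zero, smul_eq_mul, mul_one]

theorem macOp_Qprime (hq : ∀ k : ℕ+, 1 - q ^ (k : ℕ) ≠ 0) (ht : ∀ k : ℕ+, 1 - t ^ (k : ℕ) ≠ 0)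
    (ht0 : t ≠ 0) (hP : IsMacdonaldBasis q t P) (μ : Multiset ℕ+) :
    macOp q t⁻¹ (Qprime q t P μ) = eig q t⁻¹ μ • Qprime q t P μ := by
  refine sub_eq_zero.1 (eq_zero_of_forall_hallPairing_macdonald hP fun ν ↦ ?_)
  rw [map_sub, map_smul, hallPairing_Qprime hq ht hP, sub_eq_zero, smul_ite, smul_zero,
    smul_eq_mul, mul_one]
  obtain h | h := le_or_gt (colexKey ν) (colexKey μ)
  · exact hallPairing_macOp_Qprime_of_le hq ht hP _ h
  have hne : μ ≠ ν := ne_of_apply_ne colexKey h.ne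
  have hc (k : ℕ+) : (1 - q ^ (k : ℕ)) * qtRatio t q k = 1 - t ^ (k : ℕ) :=
    mul_div_cancel₀ _ (hq k)
  have hscale (ρ : Multiset ℕ+) :
      scaleHom (qtRatio q t) (P ρ) = innerQT q t (P ρ) (P ρ) • Qprime q t P ρ := by
    rw [Qprime_eq_smul, smul_inv_smul₀ (innerQT_self_ne_zero hq ht hP ρ)]
  rw [if_neg hne, ← pairing_scaleHom_eq_hallPairing hq ht, ← pairing_macOp_comm
    (inv_mul_cancel₀ ht0) hc, pairing_comm, Qprime_eq_smul μ, map_smul, LinearMap.smul_apply,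
    pairing_scaleHom_eq_hallPairing hq ht, hscale, map_smul, map_smul,
    hallPairing_macOp_Qprime_of_le hq ht hP _ h.le, if_neg hne.symm, smul_zero, smul_zero]

end Macdonald

section PartQuotient

/-- The partition whose multiplicities are the quotients by `l` of those of `μ`. -/
def partDiv (l : ℕ) (μ : Multiset ℕ+) : Multiset ℕ+ :=
  Finsupp.toMultiset ((Multiset.toFinsupp μ).mapRange (· / l) (Nat.zero_div l))

/-- The partition `μ̄` whose multiplicities are the remainders modulo `l` of those of `μ`. -/
def partMod (l : ℕ) (μ : Multiset ℕ+) : Multiset ℕ+ :=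
  Finsupp.toMultiset ((Multiset.toFinsupp μ).mapRange (· % l) (Nat.zero_mod l))

variable {l : ℕ}

lemma count_partDiv (μ : Multiset ℕ+) (a : ℕ+) : (partDiv l μ).count a = μ.count a / l := by
  simp [partDiv, Finsupp.count_toMultiset]

lemma count_partMod (μ : Multiset ℕ+) (a : ℕ+) : (partMod l μ).count a = μ.count a % l := by
  simp [partMod, Finsupp.count_toMultiset]

lemma nsmul_partDiv_add_partMod (μ : Multiset ℕ+) : l • partDiv l μ + partMod l μ = μ := by
  ext a
  rw [Multiset.count_add, Multiset.count_nsmul, count_partDiv, count_partMod, Nat.div_add_mod]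

lemma partMod_nsmul_add (β μ : Multiset ℕ+) : partMod l (l • β + μ) = partMod l μ := by
  ext a
  simp [count_partMod, Multiset.count_nsmul]

lemma partDiv_nsmul_add (hl : 0 < l) (β μ : Multiset ℕ+) :
    partDiv l (l • β + μ) = β + partDiv l μ := by
  ext a
  simp [count_partDiv, Multiset.count_nsmul, Nat.mul_add_div hl]

lemma partMod_partMod (μ : Multiset ℕ+) : partMod l (partMod l μ) = partMod l μ := by
  ext a
  simp [count_partMod]

lemma partDiv_partMod (μ : Multiset ℕ+) : partDiv l (partMod l μ) = 0 := by
  ext a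
  simp [count_partMod, count_partDiv, Nat.mod_div_self]

lemma partMod_zero : partMod l 0 = 0 := by
  ext a
  simp [count_partMod]

lemma wt_eq_zero_iff {μ : Multiset ℕ+} : wt μ = 0 ↔ μ = 0 := by
  refine ⟨fun h ↦ Multiset.eq_zero_of_forall_notMem fun a ha ↦ ?_, fun h ↦ h ▸ wt_zero⟩
  have := le_wt_of_mem ha
  have := a.pos
  omega

lemma eq_partMod_of_wt_eq (hl : 0 < l) {μ : Multiset ℕ+} (h : wt μ = wt (partMod l μ)) :
    μ = partMod l μ := by
  have hμ := nsmul_partDiv_add_partMod (l := l) μ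
  have hwt := congrArg wt hμ
  rw [wt_add, wt_nsmul, h, add_eq_right, mul_eq_zero, wt_eq_zero_iff] at hwt
  rw [hwt.resolve_left hl.ne', smul_zero, zero_add] at hμ
  exact hμ.symm

lemma not_nsmul_singleton_precedes (hl : 0 < l) (a : ℕ+) (β : Multiset ℕ+) :
    ¬ l • {a} ≺ l • β := by
  rintro ⟨hwt, hkey⟩
  rw [wt_nsmul, wt_nsmul, wt_singleton] at hwt
  have hwt' := Nat.eq_of_mul_eq_mul_left hl hwt
  obtain ⟨b, hb, hab⟩ : ∃ b ∈ l • β, a ≤ b := by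
    by_contra! hlt
    exact hkey.not_gt (colexKey_lt_of_forall_lt hlt (by simp [Multiset.mem_nsmul, hl.ne']))
  have hbβ := Multiset.mem_of_mem_nsmul hb
  have hsum := congrArg wt (Multiset.cons_erase hbβ)
  rw [wt_cons, ← hwt'] at hsum
  have hab' : (a : ℕ) ≤ b := hab
  have hβ := Multiset.cons_erase hbβ
  rw [wt_eq_zero_iff.1 (by omega : wt (β.erase b) = 0), ← PNat.coe_inj.1 (by omega : (a : ℕ) = b)]
    at hβ
  rw [← hβ] at hkey
  exact lt_irrefl _ hkey

end PartQuotient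

section RootFactors

variable {R : Type} [CommRing R] [Algebra ℚ R]

/-- The complete homogeneous symmetric function of the alphabet `x_i c_j`, `j < l`, that is, of the
alphabet with power sums `(c_0^k + … + c_{l-1}^k) p_k`. -/
def alphabetSym (c : ℕ → R) (l n : ℕ) : SymFn R :=
  hOf (fun k ↦ C (∑ i ∈ Finset.range l, c i ^ (k : ℕ)) * X k) n

lemma alphabetSym_zero_succ (c : ℕ → R) (n : ℕ) : alphabetSym c 0 (n + 1) = 0 := by
  refine succ_mul_left_cancel (n := n) ?_
  rw [alphabetSym, succ_mul_hOf_succ]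
  simp

lemma alphabetSym_succ (c : ℕ → R) (l n : ℕ) :
    alphabetSym c (l + 1) n = ∑ j ∈ Finset.range (n + 1),
      C (c l ^ (n - j)) * (alphabetSym c l j * completeSym (n - j)) := by
  have hsplit : (fun k : ℕ+ ↦ C (∑ i ∈ Finset.range (l + 1), c i ^ (k : ℕ)) * X k) =
      fun k : ℕ+ ↦ C (∑ i ∈ Finset.range l, c i ^ (k : ℕ)) * X k + C (c l) ^ (k : ℕ) * X k := by
    funext k
    rw [Finset.sum_range_succ, C_add, add_mul, C_pow]
  rw [alphabetSym, hsplit, hOf_add]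
  refine Finset.sum_congr rfl fun j _ ↦ ?_
  rw [hOf_pow_mul, C_pow, mul_left_comm]
  rfl

lemma exists_completeSym_eq_completePar (n : ℕ) : ∃ ρ : Multiset ℕ+,
    completeSym n = (completePar ρ : SymFn R) ∧ wt ρ = n ∧ ρ.card ≤ 1 := by
  obtain rfl | hn := n.eq_zero_or_pos
  · exact ⟨0, by rw [completeSym_zero, completePar_zero], wt_zero, by simp⟩
  · lift n to ℕ+ using hn
    exact ⟨{n}, (completePar_singleton n).symm, wt_singleton n, by simp⟩

lemma mul_completeSym_mem_span {S T : Set (Multiset ℕ+)} {f : SymFn R}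
    (hf : f ∈ Submodule.span R (completePar '' S)) {n : ℕ}
    (h : ∀ ν ∈ S, ∀ ρ, wt ρ = n → ρ.card ≤ 1 → ν + ρ ∈ T) :
    f * completeSym n ∈ Submodule.span R (completePar '' T) := by
  obtain ⟨ρ, hρ, hwt, hcard⟩ := exists_completeSym_eq_completePar (R := R) n
  have hmul := Submodule.mul_mem_mul hf (Submodule.mem_span_singleton_self (completePar ρ))
  rw [Submodule.span_mul_span] at hmul
  rw [hρ]
  refine Submodule.span_mono ?_ hmul
  rintro _ ⟨_, ⟨ν, hν, rfl⟩, _, rfl, rfl⟩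
  exact ⟨ν + ρ, h ν hν ρ hwt hcard, completePar_add ν ρ⟩

lemma alphabetSym_mem_span_card_le (c : ℕ → R) (l n : ℕ) :
    alphabetSym c l n ∈ Submodule.span R (completePar '' {ν | wt ν = n ∧ ν.card ≤ l}) := by
  induction l generalizing n with
  | zero =>
    cases n with
    | zero =>
      rw [alphabetSym, hOf_zero, ← completePar_zero]
      exact Submodule.subset_span ⟨0, by simp [wt_zero], rfl⟩
    | succ n =>
      rw [alphabetSym_zero_succ]
      exact zero_mem _
  | succ l ih =>
    rw [alphabetSym_succ]
    refine sum_mem fun j hj ↦ C_mul_mem _ (mul_completeSym_mem_span (ih j) ?_)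
    rintro ν ⟨hν, hνl⟩ ρ hρ hρl
    have := Finset.mem_range.1 hj
    rw [Set.mem_ofPred_eq, wt_add, Multiset.card_add]
    omega

lemma wt_le_card_mul {μ : Multiset ℕ+} {a : ℕ+} (h : ∀ b ∈ μ, b ≤ a) : wt μ ≤ μ.card * a := by
  simpa [wt] using Multiset.sum_le_card_nsmul (μ.map fun b : ℕ+ ↦ (b : ℕ)) a (by simpa using h)

lemma nsmul_singleton_precedes {l : ℕ} {a : ℕ+} {ν : Multiset ℕ+} (hwt : wt ν = l * a)
    (hcard : ν.card ≤ l) (hne : ν ≠ l • {a}) : l • {a} ≺ ν := by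
  obtain ⟨b, hb, hab⟩ : ∃ b ∈ ν, a < b := by
    by_contra! hle
    have heq : ∀ b ∈ ν, b = a := fun b hb ↦ by
      refine (hle b hb).antisymm (not_lt.1 fun hba ↦ ?_)
      have hcons := wt_cons b (ν.erase b)
      have herase := wt_le_card_mul (μ := ν.erase b) fun x hx ↦
        hle x (Multiset.mem_of_mem_erase hx)
      have hmul := Nat.mul_le_mul_right (a : ℕ) hcard
      have hba' : (b : ℕ) < a := hba
      rw [← Multiset.card_erase_add_one hb, add_one_mul] at hmul
      rw [Multiset.cons_erase hb] at hcons
      omega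
    rw [Multiset.eq_replicate_of_mem heq, ← Multiset.nsmul_singleton] at hwt hne
    rw [wt_nsmul, wt_singleton] at hwt
    exact hne (by rw [Nat.eq_of_mul_eq_mul_right a.pos hwt])
  refine ⟨by rw [hwt, wt_nsmul, wt_singleton], colexKey_lt_of_forall_lt (fun x hx ↦ ?_) hb⟩
  rwa [Multiset.mem_singleton.1 (Multiset.mem_of_mem_nsmul hx)]

lemma alphabetSym_sub_mem_upperSpan (c : ℕ → R) (l : ℕ) (a : ℕ+) :
    alphabetSym c l (l * a) - C (∏ i ∈ Finset.range l, c i ^ (a : ℕ)) * completePar (l • {a}) ∈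
      upperSpan R Precedes completePar (l • {a}) := by
  induction l with
  | zero => simp [alphabetSym, hOf_zero, completePar_zero]
  | succ l ih =>
    have hdiag : (l + 1) * (a : ℕ) - l * a = a := by rw [add_one_mul, Nat.add_sub_cancel_left]
    have hmem : l * (a : ℕ) ∈ Finset.range ((l + 1) * a + 1) :=
      Finset.mem_range.2 (Nat.lt_succ_of_le (Nat.mul_le_mul_right _ l.le_succ))
    rw [alphabetSym_succ, ← Finset.sum_erase_add _ _ hmem, add_sub_assoc]
    refine add_mem (sum_mem fun j hj ↦ C_mul_mem _ ?_) ?_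
    · obtain ⟨hjl, hj⟩ := Finset.mem_erase.1 hj
      have hj := Finset.mem_range.1 hj
      refine mul_completeSym_mem_span (alphabetSym_mem_span_card_le c l j) ?_
      rintro ν ⟨hν, hνl⟩ ρ hρ hρl
      refine nsmul_singleton_precedes (by rw [wt_add]; omega) (by rw [Multiset.card_add]; omega)
        fun heq ↦ ?_
      have hcard := congrArg Multiset.card heq
      rw [Multiset.card_add, Multiset.card_nsmul, Multiset.card_singleton, mul_one] at hcard
      obtain ⟨b, rfl⟩ := Multiset.card_eq_one.1 (by omega : ρ.card = 1)
      have hb : b ∈ (l + 1) • ({a} : Multiset ℕ+) := heq ▸ by simp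
      rw [wt_singleton, Multiset.mem_singleton.1 (Multiset.mem_of_mem_nsmul hb)] at hρ
      exact hjl (by rw [add_one_mul] at hρ hj; omega)
    · rw [hdiag, Finset.prod_range_succ, succ_nsmul, completePar_add, completePar_singleton]
      convert C_mul_mem (c l ^ (a : ℕ)) (completePar_mul_mem_upperSpan {a} ih) using 1
      · rw [add_comm]
      · rw [completePar_singleton, C_mul]
        ring

lemma mul_mem_upperSpan {μ ν : Multiset ℕ+} {f g : SymFn R}
    (hf : f ∈ upperSpan R Precedes completePar μ) (hg : g ∈ upperSpan R Precedes completePar ν) :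
    f * g ∈ upperSpan R Precedes completePar (μ + ν) := by
  refine map_mem_of_mem_upperSpan (f := LinearMap.mulRight R g) (fun ρ hρ ↦ ?_) hf
  exact upperSpan_mono ((add_precedes_add_right ν).2 hρ) (completePar_mul_mem_upperSpan ρ hg)

lemma mul_sub_completePar_mem_upperSpan {μ ν : Multiset ℕ+} {f g : SymFn R}
    (hf : f - completePar μ ∈ upperSpan R Precedes completePar μ)
    (hg : g - completePar ν ∈ upperSpan R Precedes completePar ν) :
    f * g - completePar (μ + ν) ∈ upperSpan R Precedes completePar (μ + ν) := by
  have hsplit : f * g - completePar (μ + ν) = (f - completePar μ) * (g - completePar ν) +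
      completePar μ * (g - completePar ν) + completePar ν * (f - completePar μ) := by
    rw [completePar_add]
    ring
  rw [hsplit]
  refine add_mem (add_mem (mul_mem_upperSpan hf hg) (completePar_mul_mem_upperSpan μ hg)) ?_
  rw [add_comm μ]
  exact completePar_mul_mem_upperSpan ν hf

variable {K : Type} [Field K] {σ : K} {l : ℕ}

lemma sum_pow_pow_eq_zero (hσ : σ ^ l = 1) {k : ℕ} (hk : σ ^ k ≠ 1) :
    ∑ i ∈ Finset.range l, (σ ^ i) ^ k = 0 := by
  simp_rw [pow_right_comm σ _ k]
  rw [geom_sum_eq hk, pow_right_comm, hσ, one_pow, sub_self, zero_div]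

variable [CharZero K]

/-- The specialization of `Q'` at the rectangular partition `(a^l)` at a root of unity: the function
`h_{la}` of the alphabet `x_i σ^j`, `j < l`, normalized to have leading term `h_{(a^l)}`. -/
def rootFactor (σ : K) (l : ℕ) (a : ℕ+) : SymFn K :=
  C (∏ i ∈ Finset.range l, (σ ^ i) ^ (a : ℕ))⁻¹ * alphabetSym (σ ^ ·) l (l * a)

lemma shift_rootFactor (hσ : σ ^ l = 1) (a : ℕ+) :
    shift (fun k ↦ 1 - σ ^ (k : ℕ)) (rootFactor σ l a) = Polynomial.C (rootFactor σ l a) := by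
  have hX (k : ℕ+) : shift (fun k ↦ 1 - σ ^ (k : ℕ))
      (C (∑ i ∈ Finset.range l, (σ ^ i) ^ (k : ℕ)) * X k) =
        Polynomial.C (C (∑ i ∈ Finset.range l, (σ ^ i) ^ (k : ℕ)) * X k) := by
    rw [map_mul, shift_X, mul_add, Polynomial.C_mul]
    by_cases hk : σ ^ (k : ℕ) = 1
    · simp [hk]
    · simp [sum_pow_pow_eq_zero hσ hk]
  have hsym (n : ℕ) : shift (fun k ↦ 1 - σ ^ (k : ℕ)) (alphabetSym (σ ^ ·) l n) =
      Polynomial.C (alphabetSym (σ ^ ·) l n) := by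
    rw [alphabetSym, ← AlgHom.coe_toRingHom, map_hOf, map_hOf]
    simp only [AlgHom.coe_toRingHom, hX]
  simp [rootFactor, hsym]

lemma rootFactor_sub_completePar_mem (hσ : σ ≠ 0) (l : ℕ) (a : ℕ+) :
    rootFactor σ l a - completePar (l • {a}) ∈ upperSpan K Precedes completePar (l • {a}) := by
  have hprod : ∏ i ∈ Finset.range l, (σ ^ i) ^ (a : ℕ) ≠ 0 :=
    Finset.prod_ne_zero_iff.2 fun i _ ↦ pow_ne_zero _ (pow_ne_zero i hσ)
  have h := C_mul_mem (∏ i ∈ Finset.range l, (σ ^ i) ^ (a : ℕ))⁻¹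
    (alphabetSym_sub_mem_upperSpan (σ ^ ·) l a)
  rwa [mul_sub, ← mul_assoc, ← C_mul, inv_mul_cancel₀ hprod, C_1, one_mul] at h

end RootFactors

section FactorBasis

variable {K : Type} [Field K] [CharZero K] {q σ : K} {l : ℕ} {g : Multiset ℕ+ → SymFn K}

/-- The family `g` is unitriangular, and consists of eigenvectors of Macdonald's operator at the
indices `λ` whose multiplicities are smaller than `l`. -/
structure IsReducedEigenfamily (q σ : K) (l : ℕ) (g : Multiset ℕ+ → SymFn K) : Prop where
  isUnitriangular : IsUnitriangular K Precedes completePar g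
  macOp_apply : ∀ lam, partMod l lam = lam → macOp q σ (g lam) = eig q σ lam • g lam

lemma exists_isReducedEigenfamily (hl : 0 < l)
    (heig : ∀ μ ρ, eig q σ μ = eig q σ ρ → partMod l μ = partMod l ρ) :
    ∃ g, IsReducedEigenfamily q σ l g := by
  have hex (lam : Multiset ℕ+) : ∃ v, v - completePar lam ∈ upperSpan K Precedes completePar lam ∧
      (partMod l lam = lam → macOp q σ v = eig q σ lam • v) := by
    by_cases hlam : partMod l lam = lam
    · have hne (ν : Multiset ℕ+) (hν : lam ≺ ν) : eig q σ ν ≠ eig q σ lam := fun he ↦ by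
        have hmod := (heig ν lam he).trans hlam
        have hνlam := eq_partMod_of_wt_eq hl (by rw [hmod, hν.1] : wt ν = wt (partMod l ν))
        exact irrefl (r := Precedes) ν (by rwa [← hmod, ← hνlam] at hν)
      obtain ⟨v, hv, heq⟩ := (isTriangular_macOp_completePar q σ).exists_eigenvector
        wellFounded_swap_precedes hne
      exact ⟨v, hv, fun _ ↦ heq⟩
    · exact ⟨completePar lam, by simp, fun h ↦ absurd h hlam⟩
  choose g hg hg' using hex
  exact ⟨g, hg, hg'⟩

/-- The products `∏_{a ∈ β} F_a`, where `F_a` is the specialization of `Q'` at `(a^l)`. -/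
def rootFactorProd (σ : K) (l : ℕ) (β : Multiset ℕ+) : SymFn K := (β.map (rootFactor σ l)).prod

/-- The candidate for the specialization of `Q'_μ` at a root of unity. -/
def factorFamily (σ : K) (l : ℕ) (g : Multiset ℕ+ → SymFn K) (μ : Multiset ℕ+) : SymFn K :=
  rootFactorProd σ l (partDiv l μ) * g (partMod l μ)

lemma rootFactorProd_zero : rootFactorProd σ l 0 = 1 := by simp [rootFactorProd]

lemma rootFactorProd_cons (a : ℕ+) (β : Multiset ℕ+) :
    rootFactorProd σ l (a ::ₘ β) = rootFactor σ l a * rootFactorProd σ l β := by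
  simp [rootFactorProd]

lemma rootFactorProd_add (β γ : Multiset ℕ+) :
    rootFactorProd σ l (β + γ) = rootFactorProd σ l β * rootFactorProd σ l γ := by
  simp [rootFactorProd]

lemma shift_rootFactorProd (hσ : σ ^ l = 1) (β : Multiset ℕ+) :
    shift (fun k ↦ 1 - σ ^ (k : ℕ)) (rootFactorProd σ l β) =
      Polynomial.C (rootFactorProd σ l β) := by
  simp [rootFactorProd, map_multiset_prod, shift_rootFactor hσ]

lemma factorFamily_nsmul_add (hl : 0 < l) (β μ : Multiset ℕ+) :
    factorFamily σ l g (l • β + μ) = rootFactorProd σ l β * factorFamily σ l g μ := by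
  rw [factorFamily, factorFamily, partDiv_nsmul_add hl, partMod_nsmul_add, rootFactorProd_add,
    mul_assoc]

lemma factorFamily_partMod (μ : Multiset ℕ+) :
    factorFamily σ l g (partMod l μ) = g (partMod l μ) := by
  rw [factorFamily, partDiv_partMod, partMod_partMod, rootFactorProd_zero, one_mul]

lemma rootFactorProd_sub_completePar_mem (hσ : σ ≠ 0) (β : Multiset ℕ+) :
    rootFactorProd σ l β - completePar (l • β) ∈ upperSpan K Precedes completePar (l • β) := by
  induction β using Multiset.induction with
  | empty => simp [rootFactorProd_zero, completePar_zero]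
  | cons a β ih =>
    rw [rootFactorProd_cons, ← Multiset.singleton_add, smul_add]
    exact mul_sub_completePar_mem_upperSpan (rootFactor_sub_completePar_mem hσ l a) ih

lemma IsReducedEigenfamily.isUnitriangular_factorFamily (hσ : σ ≠ 0)
    (hg : IsReducedEigenfamily q σ l g) :
    IsUnitriangular K Precedes completePar (factorFamily σ l g) := fun μ ↦ by
  have h := mul_sub_completePar_mem_upperSpan
    (rootFactorProd_sub_completePar_mem (l := l) hσ (partDiv l μ))
    (hg.isUnitriangular (partMod l μ))
  rwa [nsmul_partDiv_add_partMod] at h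

lemma hallPairing_schur_factorFamily (hσ : σ ≠ 0) (hg : IsReducedEigenfamily q σ l g)
    {μ ν : Multiset ℕ+} (h : colexKey μ ≤ colexKey ν) :
    hallPairing K (schur μ) (factorFamily σ l g ν) = if μ = ν then 1 else 0 := by
  have hzero := map_mem_of_mem_upperSpan (N := ⊥) (f := hallPairing K (schur μ))
    (fun ρ hρ ↦ ?_) (hg.isUnitriangular_factorFamily hσ ν)
  · rw [Submodule.mem_bot, map_sub, sub_eq_zero] at hzero
    rw [hzero, hallPairing_comm, hallPairing_completePar_schur h]
  · have hlt := h.trans_lt hρ.2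
    rw [hallPairing_comm, hallPairing_completePar_schur hlt.le,
      if_neg (ne_of_apply_ne colexKey hlt.ne), Submodule.mem_bot]

lemma linearIndependent_factorFamily (hσ : σ ≠ 0) (hg : IsReducedEigenfamily q σ l g) :
    LinearIndependent K (factorFamily σ l g) :=
  linearIndependent_of_dual_triangular (φ := fun μ ↦ hallPairing K (schur μ)) colexKey_injective
    (fun _ ↦ (hallPairing_schur_factorFamily hσ hg le_rfl).trans (if_pos rfl)) fun _ _ h ↦
      (hallPairing_schur_factorFamily hσ hg h.le).trans (if_neg (ne_of_apply_ne colexKey h.ne))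

/-- The factor family as a basis of the symmetric functions over an extension `A` of `K`. -/
def factorBasis (A : Type) [CommRing A] [Algebra K A] (hσ : σ ≠ 0)
    (hg : IsReducedEigenfamily q σ l g) : Module.Basis (Multiset ℕ+) A (SymFn A) :=
  ((Module.Basis.mk (linearIndependent_factorFamily hσ hg)
    ((hg.isUnitriangular_factorFamily hσ).span_eq_top wellFounded_swap_precedes
      span_range_completePar).ge).baseChange A).map (algebraTensorAlgEquiv K A).toLinearEquiv

lemma factorBasis_apply (A : Type) [CommRing A] [Algebra K A] (hσ : σ ≠ 0)
    (hg : IsReducedEigenfamily q σ l g) (μ : Multiset ℕ+) :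
    factorBasis A hσ hg μ = MvPolynomial.map (algebraMap K A) (factorFamily σ l g μ) := by
  simp [factorBasis]

end FactorBasis

section CoordDvd

variable {ι A M : Type*} [CommRing A] [AddCommGroup M] [Module A M]

/-- The submodule of the vectors whose `i`-th coordinate in the basis `b` is divisible by `c i`, for
all `i`. -/
def coordDvd (b : Module.Basis ι A M) (c : ι → A) : Submodule A M where
  carrier := {x | ∀ i, c i ∣ b.repr x i}
  add_mem' hx hy i := by simpa using dvd_add (hx i) (hy i)
  zero_mem' i := by simp
  smul_mem' a x hx i := by simpa using Dvd.dvd.mul_left (hx i) a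

variable {b : Module.Basis ι A M} {c : ι → A}

lemma smul_basis_mem_coordDvd {a : A} {i : ι} (h : c i ∣ a) : a • b i ∈ coordDvd b c := fun j ↦ by
  obtain rfl | hij := eq_or_ne i j
  · simpa using h
  · simp [hij]

lemma map_mem_coordDvd {T : M →ₗ[A] M} (h : ∀ i a, c i ∣ a → a • T (b i) ∈ coordDvd b c) {x : M}
    (hx : x ∈ coordDvd b c) : T x ∈ coordDvd b c := by
  rw [← b.linearCombination_repr x, Finsupp.linearCombination_apply, map_finsuppSum]
  simp only [map_smul]
  exact sum_mem fun i _ ↦ h i _ (hx i)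

end CoordDvd

section RootEigenvectors

variable {R : Type} [CommRing R] [Algebra ℚ R]

lemma macOp_mul_of_shift_eq_C {q s : R} {u : SymFn R}
    (hu : shift (fun k ↦ 1 - s ^ (k : ℕ)) u = Polynomial.C u) (f : SymFn R) :
    macOp q s (u * f) = u * macOp q s f := by
  rw [macOp_apply, map_mul, hu, kernelMap_C_mul, macOp_apply]

lemma macOp_mul_mul (q s : R) (u v f : SymFn R) :
    macOp q s (u * (v * f)) = u * macOp q s (v * f) + v * macOp q s (u * f) -
      u * v * macOp q s f + kernelMap q ((shift (fun k ↦ 1 - s ^ (k : ℕ)) u - Polynomial.C u) *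
        ((shift (fun k ↦ 1 - s ^ (k : ℕ)) v - Polynomial.C v) *
          shift (fun k ↦ 1 - s ^ (k : ℕ)) f)) := by
  simp only [macOp_apply, ← kernelMap_C_mul, ← map_add, ← map_sub, map_mul]
  congr 1
  ring

lemma conjPart_eq_mul_add (l : ℕ) (μ : Multiset ℕ+) (j : ℕ) :
    conjPart μ j = l * conjPart (partDiv l μ) j + conjPart (partMod l μ) j := by
  conv_lhs => rw [← nsmul_partDiv_add_partMod (l := l) μ]
  simp [conjPart, Multiset.countP_add, Multiset.countP_nsmul]

lemma eig_partMod {S : Type*} [CommRing S] (q : S) {σ : S} {l : ℕ} (hσ : σ ^ l = 1)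
    (μ : Multiset ℕ+) : eig q σ (partMod l μ) = eig q σ μ := by
  have hle (a : ℕ+) (ha : a ∈ partMod l μ) : (a : ℕ) ≤ wt μ := by
    rw [← nsmul_partDiv_add_partMod (l := l) μ, wt_add]
    exact (le_wt_of_mem ha).trans (Nat.le_add_left _ _)
  rw [eig_eq_sum_range q σ hle, eig]
  simp_rw [conjPart_eq_mul_add l μ, pow_add, pow_mul, hσ, one_pow, one_mul]

variable {K : Type} [Field K] [CharZero K] {q σ : K} {l : ℕ} {g : Multiset ℕ+ → SymFn K}

lemma IsReducedEigenfamily.macOp_factorFamily (hg : IsReducedEigenfamily q σ l g)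
    (hσ : σ ^ l = 1) (μ : Multiset ℕ+) :
    macOp q σ (factorFamily σ l g μ) = eig q σ μ • factorFamily σ l g μ := by
  rw [factorFamily, macOp_mul_of_shift_eq_C (shift_rootFactorProd hσ _),
    hg.macOp_apply _ (partMod_partMod μ), eig_partMod q hσ, mul_smul_comm]

variable {A A' : Type} [CommRing A] [Algebra K A] [CommRing A'] [Algebra K A']

lemma factorBasis_repr_map (hσ : σ ≠ 0) (hg : IsReducedEigenfamily q σ l g) (f : A →ₐ[K] A')
    (x : SymFn A) (ρ : Multiset ℕ+) :
    (factorBasis A' hσ hg).repr (MvPolynomial.map f x) ρ = f ((factorBasis A hσ hg).repr x ρ) := by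
  have hbasis (μ : Multiset ℕ+) :
      MvPolynomial.map (f : A →+* A') (factorBasis A hσ hg μ) = factorBasis A' hσ hg μ := by
    rw [factorBasis_apply, factorBasis_apply, MvPolynomial.map_map, AlgHom.comp_algebraMap]
  have hx : MvPolynomial.map (f : A →+* A') x =
      ((factorBasis A hσ hg).repr x).sum fun μ a ↦ f a • factorBasis A' hσ hg μ := by
    conv_lhs => rw [← (factorBasis A hσ hg).linearCombination_repr x]
    simp [Finsupp.linearCombination_apply, Finsupp.sum, smul_eq_C_mul, hbasis]
  classical
  simp only [hx, map_finsuppSum, map_smul, Module.Basis.repr_self, Finsupp.sum_apply,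
    Finsupp.smul_apply, Finsupp.single_apply, smul_eq_mul, mul_ite, mul_one, mul_zero]
  rw [Finsupp.sum_ite_eq', ite_eq_left_iff, Finsupp.notMem_support_iff]
  exact fun h ↦ by rw [h, map_zero]

lemma map_mem_upperSpan_completePar [Algebra ℚ A] {f : SymFn K} {μ : Multiset ℕ+}
    (hf : f ∈ upperSpan K Precedes completePar μ) :
    MvPolynomial.map (algebraMap K A) f ∈ upperSpan A Precedes completePar μ := by
  refine map_mem_of_mem_upperSpan (N := (upperSpan A Precedes completePar μ).restrictScalars K)
    (f := (MvPolynomial.mapAlgHom (Algebra.ofId K A)).toLinearMap) (fun ρ hρ ↦ ?_) hf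
  change MvPolynomial.map (algebraMap K A) (completePar ρ) ∈ upperSpan A Precedes completePar μ
  rw [map_completePar]
  exact mem_upperSpan hρ

lemma isUnitriangular_factorBasis (A : Type) [CommRing A] [Algebra ℚ A] [Algebra K A] (hσ : σ ≠ 0)
    (hg : IsReducedEigenfamily q σ l g) :
    IsUnitriangular A Precedes completePar (factorBasis A hσ hg) := fun μ ↦ by
  have h := map_mem_upperSpan_completePar (A := A) (hg.isUnitriangular_factorFamily hσ μ)
  rwa [map_sub, map_completePar, ← factorBasis_apply A hσ hg] at h

end RootEigenvectors

section SecondOrder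

variable {A B : Type} [CommRing A] [CommRing B] {p : A}

lemma C_dvd_of_map_eq_zero {f : A →+* B} (hf : ∀ a, f a = 0 → p ∣ a) {x : SymFn A}
    (hx : MvPolynomial.map f x = 0) : C p ∣ x := by
  refine (C_dvd_iff_dvd_coeff _ _).2 fun m ↦ hf _ ?_
  rw [← coeff_map, hx, coeff_zero]

lemma C_C_dvd_of_map_eq_zero {f : A →+* B} (hf : ∀ a, f a = 0 → p ∣ a) {x : Polynomial (SymFn A)}
    (hx : x.map (MvPolynomial.map f) = 0) : Polynomial.C (C p) ∣ x := by
  refine (Polynomial.C_dvd_iff_dvd_coeff _ _).2 fun n ↦ C_dvd_of_map_eq_zero hf ?_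
  rw [← Polynomial.coeff_map, hx, Polynomial.coeff_zero]

variable {K : Type} [Field K] [CharZero K] {q σ : K} {l : ℕ} {g : Multiset ℕ+ → SymFn K}
  [Algebra K A] {ev : A →ₐ[K] K} {s : A}

lemma C_C_dvd_shift_sub (hσ : σ ^ l = 1) (hs : ev s = σ) (hp : ∀ a, ev a = 0 → p ∣ a)
    (β : Multiset ℕ+) :
    Polynomial.C (C p) ∣ shift (fun k ↦ 1 - s ^ (k : ℕ))
        (MvPolynomial.map (algebraMap K A) (rootFactorProd σ l β)) -
      Polynomial.C (MvPolynomial.map (algebraMap K A) (rootFactorProd σ l β)) := by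
  have hev : MvPolynomial.map (ev : A →+* K)
      (MvPolynomial.map (algebraMap K A) (rootFactorProd σ l β)) = rootFactorProd σ l β := by
    rw [MvPolynomial.map_map, AlgHom.comp_algebraMap, Algebra.algebraMap_self, MvPolynomial.map_id]
  refine C_C_dvd_of_map_eq_zero (f := (ev : A →+* K)) hp ?_
  rw [Polynomial.map_sub, map_shift, Polynomial.map_C, hev, ← shift_rootFactorProd hσ, sub_eq_zero]
  simp [hs]

/-- The vectors whose coordinates in the factor basis are divisible by `p`, and even by `p²` at the
indices `ρ` with `ρ̄ = λ`. -/
def secondOrder (p : A) (hσ : σ ≠ 0) (hg : IsReducedEigenfamily q σ l g) (lam : Multiset ℕ+) :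
    Submodule A (SymFn A) :=
  coordDvd (factorBasis A hσ hg) fun ρ ↦ if partMod l ρ = lam then p * p else p

variable {hσ : σ ≠ 0} {hg : IsReducedEigenfamily q σ l g} {lam : Multiset ℕ+}

lemma mem_secondOrder {x : SymFn A} : x ∈ secondOrder p hσ hg lam ↔
    ∀ ρ, (if partMod l ρ = lam then p * p else p) ∣ (factorBasis A hσ hg).repr x ρ := Iff.rfl

lemma factorBasis_nsmul_add (hl : 0 < l) (β μ : Multiset ℕ+) :
    factorBasis A hσ hg (l • β + μ) =
      MvPolynomial.map (algebraMap K A) (rootFactorProd σ l β) * factorBasis A hσ hg μ := by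
  rw [factorBasis_apply, factorBasis_apply, factorFamily_nsmul_add hl, map_mul]

lemma rootFactorProd_mul_mem_secondOrder (hl : 0 < l) (β : Multiset ℕ+) {x : SymFn A}
    (hx : x ∈ secondOrder p hσ hg lam) :
    MvPolynomial.map (algebraMap K A) (rootFactorProd σ l β) * x ∈ secondOrder p hσ hg lam := by
  refine map_mem_coordDvd (T := LinearMap.mulLeft A
    (MvPolynomial.map (algebraMap K A) (rootFactorProd σ l β))) (fun ρ a ha ↦ ?_) hx
  rw [LinearMap.mulLeft_apply, ← factorBasis_nsmul_add hl]
  exact smul_basis_mem_coordDvd (by rwa [partMod_nsmul_add])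

lemma mem_secondOrder_of_map_eq_zero (hp : ∀ a, ev a = 0 → p ∣ a) {x : SymFn A}
    (hx : MvPolynomial.map (ev : A →+* K) x = 0)
    (hlam : ∀ ρ, partMod l ρ = lam → (factorBasis A hσ hg).repr x ρ = 0) :
    x ∈ secondOrder p hσ hg lam := by
  refine mem_secondOrder.2 fun ρ ↦ ?_
  split_ifs with h
  · rw [hlam ρ h]
    exact dvd_zero _
  · exact hp _ (by rw [← factorBasis_repr_map, hx, map_zero, Finsupp.zero_apply])

lemma map_factorBasis (ev : A →ₐ[K] K) (hσ : σ ≠ 0) (hg : IsReducedEigenfamily q σ l g)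
    (μ : Multiset ℕ+) :
    MvPolynomial.map (ev : A →+* K) (factorBasis A hσ hg μ) = factorFamily σ l g μ := by
  rw [factorBasis_apply, MvPolynomial.map_map, AlgHom.comp_algebraMap, Algebra.algebraMap_self,
    MvPolynomial.map_id]

variable {F : Type} [Field F] [Algebra K F] [Algebra A F] [IsScalarTower K A F]

lemma map_algebraMap_factorBasis (hσ : σ ≠ 0) (hg : IsReducedEigenfamily q σ l g)
    (μ : Multiset ℕ+) :
    MvPolynomial.map (algebraMap A F) (factorBasis A hσ hg μ) = factorBasis F hσ hg μ := by
  rw [factorBasis_apply, factorBasis_apply, MvPolynomial.map_map, ← IsScalarTower.algebraMap_eq]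

lemma exists_eq_map_add_of_repr {v : SymFn F} {μ : Multiset ℕ+}
    (hvμ : (factorBasis F hσ hg).repr v μ = 1)
    (hv : ∀ ρ ≠ μ, ∃ a : A, (factorBasis F hσ hg).repr v ρ = algebraMap A F (p * a)) :
    ∃ x : SymFn A, v = MvPolynomial.map (algebraMap A F) (factorBasis A hσ hg μ + C p * x) := by
  choose! a ha using hv
  have hμ : μ ∈ ((factorBasis F hσ hg).repr v).support := by simp [hvμ]
  refine ⟨∑ ρ ∈ ((factorBasis F hσ hg).repr v).support.erase μ, a ρ • factorBasis A hσ hg ρ, ?_⟩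
  conv_lhs => rw [← (factorBasis F hσ hg).linearCombination_repr v,
    Finsupp.linearCombination_apply, Finsupp.sum, ← Finset.add_sum_erase _ _ hμ, hvμ, one_smul]
  rw [map_add, map_algebraMap_factorBasis, map_mul, map_sum, Finset.mul_sum]
  congr 1
  refine Finset.sum_congr rfl fun ρ hρ ↦ ?_
  simp only [ha ρ (Finset.ne_of_mem_erase hρ), smul_eq_C_mul, map_mul, map_C,
    map_algebraMap_factorBasis, mul_assoc]

variable [Algebra ℚ A] [CharZero F]

lemma macOp_factorBasis_sub_mem_upperSpan (q' s : A) (hσ : σ ≠ 0)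
    (hg : IsReducedEigenfamily q σ l g) (μ : Multiset ℕ+) :
    macOp q' s (factorBasis A hσ hg μ) - eig q' s μ • factorBasis A hσ hg μ ∈
      upperSpan A Precedes (factorBasis A hσ hg) μ :=
  (isTriangular_macOp_completePar q' s).of_isUnitriangular wellFounded_swap_precedes
    (isUnitriangular_factorBasis A hσ hg) μ

lemma map_macOp_factorBasis_sub (hσl : σ ^ l = 1) (hs : ev s = σ) (μ : Multiset ℕ+) :
    MvPolynomial.map (ev : A →+* K) (macOp (algebraMap K A q) s (factorBasis A hσ hg μ) -
      eig (algebraMap K A q) s μ • factorBasis A hσ hg μ) = 0 := by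
  rw [map_sub, map_macOp, smul_eq_C_mul, map_mul, map_C, map_eig, map_factorBasis]
  simp [hs, hg.macOp_factorFamily hσl, smul_eq_C_mul]

lemma macOp_factorBasis_sub_mem_secondOrder (hσl : σ ^ l = 1) (hs : ev s = σ)
    (hp : ∀ a, ev a = 0 → p ∣ a) {μ : Multiset ℕ+} (hμ : ∀ ρ, partMod l ρ = lam → ¬ μ ≺ ρ) :
    macOp (algebraMap K A q) s (factorBasis A hσ hg μ) -
      eig (algebraMap K A q) s μ • factorBasis A hσ hg μ ∈ secondOrder p hσ hg lam :=
  mem_secondOrder_of_map_eq_zero hp (map_macOp_factorBasis_sub hσl hs μ) fun ρ hρ ↦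
    repr_eq_zero_of_mem_upperSpan _ (hμ ρ hρ) (macOp_factorBasis_sub_mem_upperSpan _ s hσ hg μ)

lemma kernelMap_mul_mem_secondOrder (q' : A) {x y : Polynomial (SymFn A)}
    (hx : Polynomial.C (C p) ∣ x) (hy : Polynomial.C (C p) ∣ y) (z : Polynomial (SymFn A)) :
    kernelMap q' (x * (y * z)) ∈ secondOrder p hσ hg lam := by
  obtain ⟨x, rfl⟩ := hx
  obtain ⟨y, rfl⟩ := hy
  refine mem_secondOrder.2 fun ρ ↦ ?_
  rw [mul_assoc, mul_left_comm x, mul_assoc, kernelMap_C_mul, kernelMap_C_mul,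
    ← mul_assoc, ← C_mul, C_mul', map_smul, Finsupp.smul_apply, smul_eq_mul]
  split_ifs
  · exact dvd_mul_right _ _
  · exact Dvd.dvd.mul_right (dvd_mul_right _ _) _

lemma exists_macOp_sub_smul_mem_secondOrder (hl : 0 < l) (hσl : σ ^ l = 1) (hs : ev s = σ)
    (hp : ∀ a, ev a = 0 → p ∣ a) (β : Multiset ℕ+) :
    ∃ e : A, macOp (algebraMap K A q) s (factorBasis A hσ hg (l • β + lam)) -
      e • factorBasis A hσ hg (l • β + lam) ∈ secondOrder p hσ hg lam := by
  have hbase {μ : Multiset ℕ+} (hμ : ∀ ρ, partMod l ρ = lam → ¬ μ ≺ ρ) :=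
    macOp_factorBasis_sub_mem_secondOrder (hσ := hσ) (hg := hg) hσl hs hp hμ
  have hreduced := hbase (μ := lam) fun ρ hρ hlt ↦ by
    have hρlam := eq_partMod_of_wt_eq hl (by rw [hρ, hlt.1] : wt ρ = wt (partMod l ρ))
    exact irrefl (r := Precedes) ρ (by rwa [← hρ, ← hρlam] at hlt)
  induction β using Multiset.induction with
  | empty => exact ⟨_, by simpa using hreduced⟩
  | cons a β ih =>
    obtain ⟨e, he⟩ := ih
    have hrect := hbase (μ := l • {a} + lam) fun ρ hρ hlt ↦ by
      rw [← nsmul_partDiv_add_partMod (l := l) ρ, hρ] at hlt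
      exact not_nsmul_singleton_precedes hl a (partDiv l ρ) ((add_precedes_add_right lam).1 hlt)
    rw [← Multiset.singleton_add, smul_add, add_assoc, factorBasis_nsmul_add hl {a}]
    rw [factorBasis_nsmul_add hl] at he hrect ⊢
    set u : SymFn A := MvPolynomial.map (algebraMap K A) (rootFactorProd σ l {a}) with hu
    set v : SymFn A := MvPolynomial.map (algebraMap K A) (rootFactorProd σ l β) with hv
    set b := factorBasis A hσ hg lam
    refine ⟨e + eig (algebraMap K A q) s (l • {a} + lam) - eig (algebraMap K A q) s lam, ?_⟩
    have hu_mem := rootFactorProd_mul_mem_secondOrder hl {a} he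
    have hv_mem := rootFactorProd_mul_mem_secondOrder hl β hrect
    have huv_mem := rootFactorProd_mul_mem_secondOrder hl {a}
      (rootFactorProd_mul_mem_secondOrder hl β hreduced)
    have hsecond := kernelMap_mul_mem_secondOrder (hσ := hσ) (hg := hg) (lam := lam)
      (algebraMap K A q) (C_C_dvd_shift_sub hσl hs hp {a}) (C_C_dvd_shift_sub hσl hs hp β)
      (shift (fun k ↦ 1 - s ^ (k : ℕ)) b)
    convert add_mem (sub_mem (add_mem hu_mem hv_mem) huv_mem) hsecond using 1
    rw [macOp_mul_mul, ← hu, ← hv]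
    simp only [smul_eq_C_mul, C_sub, C_add]
    ring

lemma dvd_repr_macOp_factorBasis (hl : 0 < l) (hσl : σ ^ l = 1) (hs : ev s = σ)
    (hp : ∀ a, ev a = 0 → p ∣ a) {μ ρ : Multiset ℕ+} (hμρ : μ ≠ ρ) :
    (if partMod l ρ = partMod l μ then p * p else p) ∣
      (factorBasis A hσ hg).repr (macOp (algebraMap K A q) s (factorBasis A hσ hg μ)) ρ := by
  obtain ⟨e, he⟩ := exists_macOp_sub_smul_mem_secondOrder (hσ := hσ) (hg := hg)
    (lam := partMod l μ) hl hσl hs hp (partDiv l μ)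
  rw [nsmul_partDiv_add_partMod] at he
  simpa [hμρ] using mem_secondOrder.1 he ρ

lemma repr_macOp_factorBasis_self (q' s : A) (hσ : σ ≠ 0)
    (hg : IsReducedEigenfamily q σ l g) (μ : Multiset ℕ+) :
    (factorBasis A hσ hg).repr (macOp q' s (factorBasis A hσ hg μ)) μ = eig q' s μ := by
  simpa [sub_eq_zero] using repr_eq_zero_of_mem_upperSpan _ (irrefl (r := Precedes) μ)
    (macOp_factorBasis_sub_mem_upperSpan q' s hσ hg μ)

lemma repr_macOp_factorBasis_eq_zero (q' s : A) (hσ : σ ≠ 0)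
    (hg : IsReducedEigenfamily q σ l g) {μ ρ : Multiset ℕ+} (hne : μ ≠ ρ) (h : ¬ μ ≺ ρ) :
    (factorBasis A hσ hg).repr (macOp q' s (factorBasis A hσ hg μ)) ρ = 0 := by
  simpa [hne] using repr_eq_zero_of_mem_upperSpan _ h
    (macOp_factorBasis_sub_mem_upperSpan q' s hσ hg μ)

lemma repr_macOp_algebraMap (s : A) (hσ : σ ≠ 0) (hg : IsReducedEigenfamily q σ l g)
    (v : SymFn F) (ρ : Multiset ℕ+) :
    (factorBasis F hσ hg).repr (macOp (algebraMap K F q) (algebraMap A F s) v) ρ =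
      ((factorBasis F hσ hg).repr v).sum fun μ x ↦ algebraMap A F ((factorBasis A hσ hg).repr
        (macOp (algebraMap K A q) s (factorBasis A hσ hg μ)) ρ) * x := by
  have hbasis (μ : Multiset ℕ+) : (factorBasis F hσ hg).repr
      (macOp (algebraMap K F q) (algebraMap A F s) (factorBasis F hσ hg μ)) ρ = algebraMap A F
        ((factorBasis A hσ hg).repr (macOp (algebraMap K A q) s (factorBasis A hσ hg μ)) ρ) := by
    have h := factorBasis_repr_map hσ hg (IsScalarTower.toAlgHom K A F)
      (macOp (algebraMap K A q) s (factorBasis A hσ hg μ)) ρ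
    rwa [IsScalarTower.coe_toAlgHom, map_macOp, map_algebraMap_factorBasis,
      ← IsScalarTower.algebraMap_apply, IsScalarTower.coe_toAlgHom'] at h
  conv_lhs => rw [← (factorBasis F hσ hg).linearCombination_repr v]
  simp [Finsupp.linearCombination_apply, map_finsuppSum, hbasis, mul_comm]

lemma repr_eq_algebraMap_mul_of_macOp_eq (hl : 0 < l) (hσl : σ ^ l = 1) (hs : ev s = σ)
    (hp : ∀ a, ev a = 0 → p ∣ a) (hunit : ∀ a, ev a ≠ 0 → IsUnit a) (hpF : algebraMap A F p ≠ 0)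
    (hdiff : ∀ μ ρ, eig q σ μ = eig q σ ρ → partMod l μ = partMod l ρ)
    (hsame : ∀ μ ρ, partMod l μ = partMod l ρ → μ ≠ ρ →
      Associated p (eig (algebraMap K A q) s μ - eig (algebraMap K A q) s ρ))
    {μ ρ : Multiset ℕ+} {v : SymFn F} (hvμ : (factorBasis F hσ hg).repr v μ = 1)
    (hv : macOp (algebraMap K F q) (algebraMap A F s) v =
      eig (algebraMap K F q) (algebraMap A F s) μ • v) (hρ : ρ ≠ μ) :
    ∃ a, (factorBasis F hσ hg).repr v ρ = algebraMap A F (p * a) := by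
  refine exists_eq_algebraMap_mul_of_eigenvector wellFounded_precedes hpF
    (d := fun ρ ν ↦ (factorBasis A hσ hg).repr
      (macOp (algebraMap K A q) s (factorBasis A hσ hg ν)) ρ)
    (fun ρ ν h ↦ ?_) (fun ρ ν h ↦ ?_) (fun ρ h ↦ ?_) hvμ (fun ρ ↦ ?_) hρ
  · by_contra! hne
    exact h (repr_macOp_factorBasis_eq_zero _ s hσ hg hne.1 hne.2)
  · refine Dvd.dvd.trans ?_ (dvd_repr_macOp_factorBasis hl hσl hs hp h)
    split_ifs
    exacts [dvd_mul_right p p, dvd_rfl]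
  · have hdvd := dvd_repr_macOp_factorBasis (hσ := hσ) (hg := hg) hl hσl hs hp h.symm
    simp only [repr_macOp_factorBasis_self]
    split_ifs at hdvd with hmod
    · exact ⟨p, dvd_rfl, hsame μ ρ hmod.symm h.symm, hdvd⟩
    · have hev (ν : Multiset ℕ+) : ev (eig (algebraMap K A q) s ν) = eig q σ ν := by
        simpa [hs] using map_eig (ev : A →+* K) (algebraMap K A q) s ν
      refine ⟨1, one_dvd p, associated_one_iff_isUnit.2 (hunit _ fun h0 ↦ hmod ?_) |>.symm,
        by rwa [one_mul]⟩
      rw [map_sub, hev, hev, sub_eq_zero] at h0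
      exact (hdiff _ _ h0).symm
  · rw [← repr_macOp_algebraMap, hv, repr_macOp_factorBasis_self, map_eig, map_smul]
    simp [← IsScalarTower.algebraMap_apply]

end SecondOrder

section Separation

lemma count_add_conjPart (μ : Multiset ℕ+) (a : ℕ+) :
    μ.count a + conjPart μ a = conjPart μ (a - 1) := by
  induction μ using Multiset.induction with
  | empty => simp [conjPart]
  | cons b μ ih =>
    have ha := a.pos
    have hab : a = b ↔ (a : ℕ) = b := PNat.coe_inj.symm
    rw [Multiset.count_cons, conjPart_cons, conjPart_cons, ← ih, if_congr hab rfl rfl]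
    split_ifs <;> omega

lemma partMod_eq_partMod_iff {l : ℕ} {μ ρ : Multiset ℕ+} :
    partMod l μ = partMod l ρ ↔ ∀ j, conjPart μ j ≡ conjPart ρ j [MOD l] := by
  refine ⟨fun h j ↦ ?_, fun h ↦ ?_⟩
  · rw [conjPart_eq_mul_add l μ, conjPart_eq_mul_add l ρ, h]
    exact Nat.ModEq.add_right _ (by simp [Nat.ModEq])
  · ext a
    rw [count_partMod, count_partMod]
    refine Nat.ModEq.add_right_cancel (h a) ?_
    rw [count_add_conjPart, count_add_conjPart]
    exact h _

lemma eq_of_conjPart_eq {μ ρ : Multiset ℕ+} (h : ∀ j, conjPart μ j = conjPart ρ j) : μ = ρ := by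
  ext a
  have hμ := count_add_conjPart μ a
  have hρ := count_add_conjPart ρ a
  rw [h, h] at hμ
  omega

variable {k K : Type*} [Field k] [Field K] [Algebra k K] {q : K}

lemma eq_of_sum_pow_mul_eq (hq : Transcendental k q) {N : ℕ} {c d : ℕ → k}
    (h : ∑ j ∈ Finset.range N, q ^ j * algebraMap k K (c j) =
      ∑ j ∈ Finset.range N, q ^ j * algebraMap k K (d j)) {j : ℕ} (hj : j < N) : c j = d j := by
  have hp := transcendental_iff.1 hq
    (∑ j ∈ Finset.range N, Polynomial.monomial j (c j - d j)) (by
      simp [Polynomial.aeval_monomial, mul_comm, h])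
  simpa [sub_eq_zero, Polynomial.coeff_monomial, hj] using congrArg (Polynomial.coeff · j) hp

lemma eq_of_sum_conjPart_eq (hq : Transcendental k q) (w : ℕ → k) {μ ρ : Multiset ℕ+}
    (h : ∑ j ∈ Finset.range (wt μ + wt ρ), q ^ j * algebraMap k K (w (conjPart μ j)) =
      ∑ j ∈ Finset.range (wt μ + wt ρ), q ^ j * algebraMap k K (w (conjPart ρ j))) (j : ℕ) :
    w (conjPart μ j) = w (conjPart ρ j) := by
  obtain hj | hj := lt_or_ge j (wt μ + wt ρ)
  · exact eq_of_sum_pow_mul_eq hq (c := fun j ↦ w (conjPart μ j)) h hj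
  · rw [conjPart_eq_zero fun a ha ↦ (le_wt_of_mem ha).trans (by omega),
      conjPart_eq_zero fun a ha ↦ (le_wt_of_mem ha).trans (by omega)]

lemma eig_sub_eig {S : Type*} [CommRing S] (q s : S) (μ ρ : Multiset ℕ+) :
    eig q s μ - eig q s ρ = (1 - q) *
      (∑ j ∈ Finset.range (wt μ + wt ρ), q ^ j * s ^ conjPart μ j -
        ∑ j ∈ Finset.range (wt μ + wt ρ), q ^ j * s ^ conjPart ρ j) := by
  rw [eig_eq_sum_range q s (μ := μ) (n := wt μ + wt ρ) fun a ha ↦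
      (le_wt_of_mem ha).trans (Nat.le_add_right _ _),
    eig_eq_sum_range q s (μ := ρ) (n := wt μ + wt ρ) fun a ha ↦
      (le_wt_of_mem ha).trans (Nat.le_add_left _ _)]
  simp only [mul_sub, mul_one, Finset.sum_sub_distrib]
  ring

lemma one_sub_ne_zero_of_transcendental (hq : Transcendental k q) : 1 - q ≠ 0 := fun h ↦
  hq (sub_eq_zero.1 h ▸ isAlgebraic_one)

variable {z : k} {l : ℕ}

lemma pow_eq_pow_iff_modEq_of_isPrimitiveRoot (hl : 0 < l) (hz : IsPrimitiveRoot z l) {m n : ℕ} :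
    z ^ m = z ^ n ↔ m ≡ n [MOD l] := by
  rw [(isOfFinOrder_iff_pow_eq_one.2 ⟨l, hl, hz.pow_eq_one⟩).pow_eq_pow_iff_modEq, ← hz.eq_orderOf]

lemma partMod_eq_of_eig_eq (hq : Transcendental k q) (hl : 0 < l) (hz : IsPrimitiveRoot z l)
    {μ ρ : Multiset ℕ+} (h : eig q (algebraMap k K z) μ = eig q (algebraMap k K z) ρ) :
    partMod l μ = partMod l ρ := by
  have hsum := eig_sub_eig q (algebraMap k K z) μ ρ
  rw [h, sub_self, zero_eq_mul, or_iff_right (one_sub_ne_zero_of_transcendental hq),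
    sub_eq_zero] at hsum
  refine partMod_eq_partMod_iff.2 fun j ↦ ?_
  rw [← pow_eq_pow_iff_modEq_of_isPrimitiveRoot hl hz]
  exact eq_of_sum_conjPart_eq hq (z ^ ·) (by simpa using hsum) j

lemma mul_eval_derivative_eig_sub {S : Type*} [CommRing S] (q s : S) (μ ρ : Multiset ℕ+) :
    s * (Polynomial.derivative (eig (Polynomial.C q) Polynomial.X μ -
        eig (Polynomial.C q) Polynomial.X ρ)).eval s = (1 - q) *
      (∑ j ∈ Finset.range (wt μ + wt ρ), q ^ j * (conjPart μ j * s ^ conjPart μ j) -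
        ∑ j ∈ Finset.range (wt μ + wt ρ), q ^ j * (conjPart ρ j * s ^ conjPart ρ j)) := by
  have hpow (m : ℕ) : s * (m * s ^ (m - 1)) = m * s ^ m := by
    cases m with
    | zero => simp
    | succ m => rw [Nat.add_sub_cancel, pow_succ]; ring
  have hC : (1 - Polynomial.C q : Polynomial S) = Polynomial.C (1 - q) := by simp
  simp only [eig_sub_eig, hC, Polynomial.derivative_C_mul, Polynomial.eval_mul, Polynomial.eval_C,
    Polynomial.derivative_sub, Polynomial.eval_sub, Polynomial.derivative_sum,
    Polynomial.eval_finsetSum, ← Polynomial.C_pow, Polynomial.derivative_X_pow,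
    Polynomial.eval_pow, Polynomial.eval_X, ← hpow]
  rw [mul_left_comm, mul_sub, Finset.mul_sum, Finset.mul_sum]
  simp only [mul_left_comm s]

lemma eval_derivative_eig_sub_ne_zero [CharZero K] (hq : Transcendental k q) (hl : 0 < l)
    (hz : IsPrimitiveRoot z l) {μ ρ : Multiset ℕ+} (hmod : partMod l μ = partMod l ρ)
    (hne : μ ≠ ρ) :
    (Polynomial.derivative (eig (Polynomial.C q) Polynomial.X μ -
      eig (Polynomial.C q) Polynomial.X ρ)).eval (algebraMap k K z) ≠ 0 := fun h ↦ by
  have hsum := mul_eval_derivative_eig_sub q (algebraMap k K z) μ ρ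
  rw [h, mul_zero, zero_eq_mul, or_iff_right (one_sub_ne_zero_of_transcendental hq),
    sub_eq_zero] at hsum
  refine hne (eq_of_conjPart_eq fun j ↦ ?_)
  have := (algebraMap k K).charZero
  have hj := eq_of_sum_conjPart_eq hq (fun m ↦ m * z ^ m) (by simpa using hsum) j
  have hpow : z ^ conjPart μ j = z ^ conjPart ρ j :=
    (pow_eq_pow_iff_modEq_of_isPrimitiveRoot hl hz).2 (partMod_eq_partMod_iff.1 hmod j)
  rw [hpow] at hj
  exact_mod_cast mul_right_cancel₀ (pow_ne_zero _ (hz.ne_zero hl.ne')) hj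

end Separation

section SimpleZero

variable {K A : Type*} [Field K] [CommRing A] [Algebra K A] {ev : A →ₐ[K] K} {s : A} {σ : K}

lemma associated_aeval_of_derivative_ne_zero (hunit : ∀ a, ev a ≠ 0 → IsUnit a) (hs : ev s = σ)
    {f : Polynomial K} (hf : f.eval σ = 0) (hf' : f.derivative.eval σ ≠ 0) :
    Associated (s - algebraMap K A σ) (Polynomial.aeval s f) := by
  obtain ⟨f, rfl⟩ := Polynomial.dvd_iff_isRoot.2 hf
  have hev : ev (Polynomial.aeval s f) ≠ 0 := by
    rw [← Polynomial.aeval_algHom_apply, hs, Polynomial.coe_aeval_eq_eval]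
    simpa using hf'
  simpa using (associated_mul_unit_left _ _ (hunit _ hev)).symm

end SimpleZero

section RegularAt

variable {K : Type*} [Field K]

/-- The local ring of the rational functions which are defined at `c`. -/
def regularAt (c : K) : Subalgebra K (RatFunc K) where
  carrier := {x | x.denom.eval c ≠ 0}
  mul_mem' {x y} hx hy := fun h ↦ by
    have := Polynomial.eval_eq_zero_of_dvd_of_eval_eq_zero (RatFunc.denom_mul_dvd x y) h
    rw [Polynomial.eval_mul] at this
    exact mul_ne_zero hx hy this
  add_mem' {x y} hx hy := fun h ↦ by
    have := Polynomial.eval_eq_zero_of_dvd_of_eval_eq_zero (RatFunc.denom_add_dvd x y) h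
    rw [Polynomial.eval_mul] at this
    exact mul_ne_zero hx hy this
  algebraMap_mem' a := by simp [RatFunc.algebraMap_eq_C]

variable {c : K}

lemma mem_regularAt {x : RatFunc K} : x ∈ regularAt c ↔ x.denom.eval c ≠ 0 := Iff.rfl

lemma div_mem_regularAt (f : Polynomial K) {g : Polynomial K} (hg : g.eval c ≠ 0) :
    algebraMap _ (RatFunc K) f / algebraMap _ _ g ∈ regularAt c := fun h ↦
  hg (Polynomial.eval_eq_zero_of_dvd_of_eval_eq_zero (RatFunc.denom_div_dvd f g) h)

/-- Evaluation at `c`. -/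
def evalAt (c : K) : regularAt c →ₐ[K] K where
  toFun x := RatFunc.eval (RingHom.id K) c x
  map_one' := RatFunc.eval_one _ _
  map_mul' x y := RatFunc.eval_mul _ _ x.2 y.2
  map_zero' := RatFunc.eval_zero _ _
  map_add' x y := RatFunc.eval_add _ _ x.2 y.2
  commutes' a := by simp [RatFunc.algebraMap_eq_C]

lemma evalAt_apply (x : regularAt c) : evalAt c x = RatFunc.eval (RingHom.id K) c x := rfl

lemma evalAt_eq_zero_iff {x : regularAt c} : evalAt c x = 0 ↔ (x : RatFunc K).num.eval c = 0 := by
  have hx : (x : RatFunc K).denom.eval c ≠ 0 := x.2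
  simp [evalAt_apply, RatFunc.eval, hx]

lemma isUnit_of_evalAt_ne_zero (x : regularAt c) (hx : evalAt c x ≠ 0) : IsUnit x := by
  have hnum := evalAt_eq_zero_iff.not.1 hx
  have hx0 : (x : RatFunc K) ≠ 0 := fun h ↦ hnum (by simp [h])
  have hinv : (x : RatFunc K)⁻¹ ∈ regularAt c := fun h ↦
    hnum (Polynomial.eval_eq_zero_of_dvd_of_eval_eq_zero (RatFunc.denom_inv_dvd hx0) h)
  exact IsUnit.of_mul_eq_one ⟨_, hinv⟩ (Subtype.ext (mul_inv_cancel₀ hx0))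

lemma X_mem_regularAt : (RatFunc.X : RatFunc K) ∈ regularAt c := by simp [mem_regularAt]

lemma inv_X_mem_regularAt (hc : c ≠ 0) : (RatFunc.X : RatFunc K)⁻¹ ∈ regularAt c := fun h ↦ by
  have := Polynomial.eval_eq_zero_of_dvd_of_eval_eq_zero (RatFunc.denom_inv_dvd RatFunc.X_ne_zero) h
  exact hc (by simpa using this)

/-- The function `t⁻¹` on the local ring at a nonzero point. -/
def invX (hc : c ≠ 0) : regularAt c := ⟨RatFunc.X⁻¹, inv_X_mem_regularAt hc⟩

lemma evalAt_invX (hc : c ≠ 0) : evalAt c (invX hc) = c⁻¹ := by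
  have hX : evalAt c ⟨RatFunc.X, X_mem_regularAt⟩ = c := by simp [evalAt_apply]
  have hmul : invX hc * ⟨RatFunc.X, X_mem_regularAt⟩ = 1 :=
    Subtype.ext (inv_mul_cancel₀ RatFunc.X_ne_zero)
  refine eq_inv_of_mul_eq_one_left ?_
  rw [← map_one (evalAt c), ← hmul, map_mul, hX]

/-- The numerator of `x` is a multiple of `X - c = -c X (X⁻¹ - c⁻¹)`. -/
lemma invX_sub_dvd_of_evalAt_eq_zero (hc : c ≠ 0) {x : regularAt c} (hx : evalAt c x = 0) :
    invX hc - algebraMap K _ c⁻¹ ∣ x := by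
  obtain ⟨f, hf⟩ := Polynomial.dvd_iff_isRoot.2 (evalAt_eq_zero_iff.1 hx)
  refine ⟨⟨_, div_mem_regularAt (-Polynomial.C c * Polynomial.X * f) x.2⟩, Subtype.ext ?_⟩
  have hX : (RatFunc.X : RatFunc K) ≠ 0 := RatFunc.X_ne_zero
  have hC : (RatFunc.C c : RatFunc K) ≠ 0 := by simpa using hc
  change (x : RatFunc K) = (RatFunc.X⁻¹ - algebraMap K (RatFunc K) c⁻¹) * _
  conv_lhs => rw [← RatFunc.num_div_denom (x : RatFunc K), hf]
  rw [RatFunc.algebraMap_eq_C]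
  simp only [map_mul, map_neg, map_sub, map_inv₀, RatFunc.algebraMap_X, RatFunc.algebraMap_C]
  field_simp
  ring

end RegularAt

section LeadingCoordinate

variable {K : Type} [Field K] [CharZero K] {q σ : K} {l : ℕ} {g : Multiset ℕ+ → SymFn K}
  {F : Type} [Field F] [CharZero F] [Algebra K F]

lemma repr_completePar (hσ : σ ≠ 0) (hg : IsReducedEigenfamily q σ l g) {μ ρ : Multiset ℕ+}
    (h : colexKey μ ≤ colexKey ρ) :
    (factorBasis F hσ hg).repr (completePar ρ) μ = if ρ = μ then 1 else 0 := by
  have hzero := repr_eq_zero_of_mem_upperSpan _ (fun hlt : ρ ≺ μ ↦ h.not_gt hlt.2)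
    ((isUnitriangular_factorBasis F hσ hg).symm wellFounded_swap_precedes ρ)
  simpa [sub_eq_zero, Finsupp.single_apply] using hzero

lemma repr_self_eq_one (hσ : σ ≠ 0) (hg : IsReducedEigenfamily q σ l g) {μ : Multiset ℕ+}
    {v : SymFn F}
    (hv : v - completePar μ ∈
      upperSpan F (fun ν ρ ↦ colexKey ν < colexKey ρ) completePar μ) :
    (factorBasis F hσ hg).repr v μ = 1 := by
  have hzero := map_mem_of_mem_upperSpan (N := ⊥) (f := (factorBasis F hσ hg).coord μ)
    (fun ρ hρ ↦ ?_) hv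
  · rwa [Submodule.mem_bot, map_sub, Module.Basis.coord_apply, Module.Basis.coord_apply,
      repr_completePar hσ hg le_rfl, if_pos rfl, sub_eq_zero] at hzero
  · rw [Submodule.mem_bot, Module.Basis.coord_apply, repr_completePar hσ hg hρ.le,
      if_neg (ne_of_apply_ne colexKey hρ.ne')]

end LeadingCoordinate

section Specialization

variable {k : Type*} {K : Type} [Field k] [Field K] [Algebra k K] {q c : K} {l : ℕ}

lemma one_sub_pow_ne_zero_of_transcendental (hq : Transcendental k q) (m : ℕ+) :
    1 - q ^ (m : ℕ) ≠ 0 :=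
  one_sub_ne_zero_of_transcendental (hq.pow m.pos)

lemma algebraMap_invX_sub_ne_zero (hc : c ≠ 0) :
    algebraMap (regularAt c) (RatFunc K) (invX hc - algebraMap K (regularAt c) c⁻¹) ≠ 0 := by
  intro h
  have hX : (RatFunc.X : RatFunc K)⁻¹ = (algebraMap K (RatFunc K) c)⁻¹ := by
    rw [← map_inv₀]
    exact sub_eq_zero.1 h
  exact RatFunc.transcendental_X (inv_injective hX ▸ isAlgebraic_algebraMap c)

lemma eval_eig_sub_eq_zero {σ : K} (hσ : σ ^ l = 1) {μ ρ : Multiset ℕ+}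
    (h : partMod l μ = partMod l ρ) :
    (eig (Polynomial.C q) Polynomial.X μ - eig (Polynomial.C q) Polynomial.X ρ).eval σ = 0 := by
  have heval (ν : Multiset ℕ+) : (eig (Polynomial.C q) Polynomial.X ν).eval σ = eig q σ ν := by
    simpa using map_eig (Polynomial.evalRingHom σ) (Polynomial.C q) Polynomial.X ν
  rw [Polynomial.eval_sub, heval, heval, ← eig_partMod q hσ μ, h, eig_partMod q hσ, sub_self]

/-- Coefficientwise specialization `t = c` of a symmetric function over `K(t)`; over `ℂ(q)` this is
`specT`. -/
def specialize (c : K) (f : SymFn (RatFunc K)) : SymFn K :=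
  ∑ m ∈ f.support, monomial m (RatFunc.eval (RingHom.id K) c (coeff m f))

lemma coeff_specialize (c : K) (f : SymFn (RatFunc K)) (m : ℕ+ →₀ ℕ) :
    coeff m (specialize c f) = RatFunc.eval (RingHom.id K) c (coeff m f) := by
  classical
  simp only [specialize, coeff_sum, coeff_monomial, Finset.sum_ite_eq', mem_support_iff]
  split_ifs with h
  · rfl
  · rw [not_not.1 h, RatFunc.eval_zero]

lemma specialize_map_algebraMap (f : SymFn (regularAt c)) :
    specialize c (MvPolynomial.map (algebraMap (regularAt c) (RatFunc K)) f) =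
      MvPolynomial.map (evalAt c : regularAt c →+* K) f := by
  ext m
  rw [coeff_specialize, coeff_map, coeff_map]
  rfl

variable [CharZero K] {z : k}

lemma associated_eig_sub (hq : Transcendental k q) (hl : 0 < l) (hz : IsPrimitiveRoot z l)
    (hc : c ≠ 0) (hcz : algebraMap k K z = c⁻¹) {μ ρ : Multiset ℕ+}
    (hmod : partMod l μ = partMod l ρ) (hne : μ ≠ ρ) :
    Associated (invX hc - algebraMap K (regularAt c) c⁻¹)
      (eig (algebraMap K (regularAt c) q) (invX hc) μ -
        eig (algebraMap K (regularAt c) q) (invX hc) ρ) := by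
  have haeval (ν : Multiset ℕ+) :
      Polynomial.aeval (invX hc) (eig (Polynomial.C q) Polynomial.X ν) =
        eig (algebraMap K (regularAt c) q) (invX hc) ν := by
    simpa using map_eig (Polynomial.aeval (invX hc) : Polynomial K →ₐ[K] _).toRingHom
      (Polynomial.C q) Polynomial.X ν
  have hσl : c⁻¹ ^ l = 1 := by rw [← hcz, ← map_pow, hz.pow_eq_one, map_one]
  rw [← haeval, ← haeval, ← map_sub]
  refine associated_aeval_of_derivative_ne_zero isUnit_of_evalAt_ne_zero (evalAt_invX hc)
    (eval_eig_sub_eq_zero hσl hmod) ?_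
  rw [← hcz]
  exact eval_derivative_eig_sub_ne_zero hq hl hz hmod hne

variable {g : Multiset ℕ+ → SymFn K} {P : Multiset ℕ+ → SymFn (RatFunc K)}

theorem exists_Qprime_eq_map_factorBasis (hq : Transcendental k q) (hl : 0 < l)
    (hz : IsPrimitiveRoot z l) (hc : c ≠ 0) (hcz : algebraMap k K z = c⁻¹)
    (hg : IsReducedEigenfamily q c⁻¹ l g) (hP : IsMacdonaldBasis (RatFunc.C q) RatFunc.X P)
    (μ : Multiset ℕ+) :
    ∃ x : SymFn (regularAt c), Qprime (RatFunc.C q) RatFunc.X P μ =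
      MvPolynomial.map (algebraMap (regularAt c) (RatFunc K))
        (factorBasis (regularAt c) (inv_ne_zero hc) hg μ +
          C (invX hc - algebraMap K (regularAt c) c⁻¹) * x) := by
  have hq' (m : ℕ+) : (1 : RatFunc K) - RatFunc.C q ^ (m : ℕ) ≠ 0 := by
    rw [← map_pow, ← map_one RatFunc.C, ← map_sub]
    exact (map_ne_zero _).2 (one_sub_pow_ne_zero_of_transcendental hq m)
  have hX := one_sub_pow_ne_zero_of_transcendental (RatFunc.transcendental_X (K := K))
  have hσl : c⁻¹ ^ l = 1 := by rw [← hcz, ← map_pow, hz.pow_eq_one, map_one]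
  have hself := repr_self_eq_one (inv_ne_zero hc) hg (Qprime_sub_completePar_mem hq' hX hP μ)
  refine exists_eq_map_add_of_repr hself fun ρ hρ ↦ ?_
  refine repr_eq_algebraMap_mul_of_macOp_eq (ev := evalAt c) hl hσl (evalAt_invX hc)
    (fun _ ↦ invX_sub_dvd_of_evalAt_eq_zero hc) isUnit_of_evalAt_ne_zero
    (algebraMap_invX_sub_ne_zero hc) (fun μ ρ h ↦ partMod_eq_of_eig_eq hq hl hz (hcz ▸ h))
    (fun μ ρ ↦ associated_eig_sub hq hl hz hc hcz) hself ?_ hρ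
  exact macOp_Qprime hq' hX RatFunc.X_ne_zero hP μ

lemma specialize_Qprime (hq : Transcendental k q) (hl : 0 < l) (hz : IsPrimitiveRoot z l)
    (hg : IsReducedEigenfamily q (algebraMap k K z)⁻¹ l g)
    (hP : IsMacdonaldBasis (RatFunc.C q) RatFunc.X P) (μ : Multiset ℕ+) :
    specialize (algebraMap k K z) (Qprime (RatFunc.C q) RatFunc.X P μ) =
      factorFamily (algebraMap k K z)⁻¹ l g μ := by
  have hc : algebraMap k K z ≠ 0 := (map_ne_zero _).2 (hz.ne_zero hl.ne')
  obtain ⟨x, hx⟩ :=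
    exists_Qprime_eq_map_factorBasis hq hl hz.inv hc (map_inv₀ (algebraMap k K) z) hg hP μ
  rw [hx, specialize_map_algebraMap, map_add, map_mul, map_factorBasis]
  simp [evalAt_invX]

end Specialization

section Rectangles

variable {n : ℕ} {μ : Multiset ℕ+}

lemma count_sum_replicate_count (hμ : wt μ ≤ n) {f : ℕ → ℕ} (hf : f 0 = 0) (a : ℕ+) :
    (∑ i ∈ Finset.range n, Multiset.replicate (f (μ.count (Nat.succPNat i)))
      (Nat.succPNat i)).count a = f (μ.count a) := by
  obtain ⟨j, rfl⟩ : ∃ j, a = Nat.succPNat j := ⟨a.natPred, by simp⟩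
  have hj : n ≤ j → μ.count (Nat.succPNat j) = 0 := fun hnj ↦
    Multiset.count_eq_zero.2 fun hmem ↦ by
      have := le_wt_of_mem hmem
      rw [Nat.succPNat_coe] at this
      omega
  simp only [Multiset.count_sum', Multiset.count_replicate, Nat.succPNat_inj,
    Finset.sum_ite_eq', Finset.mem_range, ite_eq_left_iff, not_lt]
  exact fun hnj ↦ by rw [hj hnj, hf]

lemma partMod_eq_sum_replicate (hμ : wt μ ≤ n) (l : ℕ) :
    partMod l μ = ∑ i ∈ Finset.range n,
      Multiset.replicate (μ.count (Nat.succPNat i) % l) (Nat.succPNat i) := by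
  ext a
  rw [count_partMod, count_sum_replicate_count (f := (· % l)) hμ (Nat.zero_mod l)]

variable {K : Type} [Field K] [CharZero K] {q σ : K} {l : ℕ} {g : Multiset ℕ+ → SymFn K}

lemma rootFactorProd_partDiv (hμ : wt μ ≤ n) (σ : K) (l : ℕ) :
    rootFactorProd σ l (partDiv l μ) = ∏ i ∈ Finset.range n,
      rootFactor σ l (Nat.succPNat i) ^ (μ.count (Nat.succPNat i) / l) := by
  have hdiv : partDiv l μ = ∑ i ∈ Finset.range n,
      Multiset.replicate (μ.count (Nat.succPNat i) / l) (Nat.succPNat i) := by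
    ext a
    rw [count_partDiv, count_sum_replicate_count (f := (· / l)) hμ (Nat.zero_div l)]
  rw [hdiv, rootFactorProd, ← Multiset.coe_mapAddMonoidHom, map_sum, Multiset.prod_sum]
  simp

lemma IsReducedEigenfamily.apply_zero (hg : IsReducedEigenfamily q σ l g) : g 0 = 1 := by
  have hempty : {ν : Multiset ℕ+ | 0 ≺ ν} = ∅ := Set.eq_empty_of_forall_notMem fun ν hν ↦ by
    have hν0 := wt_eq_zero_iff.1 (hν.1.symm.trans wt_zero)
    exact irrefl (r := Precedes) 0 (hν0 ▸ hν)
  have h := hg.isUnitriangular 0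
  rwa [upperSpan, hempty, Set.image_empty, Submodule.span_empty, Submodule.mem_bot,
    completePar_zero, sub_eq_zero] at h

lemma factorFamily_eq_mul_partMod (μ : Multiset ℕ+) :
    factorFamily σ l g μ =
      rootFactorProd σ l (partDiv l μ) * factorFamily σ l g (partMod l μ) := by
  rw [factorFamily_partMod, factorFamily]

lemma factorFamily_replicate (hl : 0 < l) (hg : IsReducedEigenfamily q σ l g) (a : ℕ+) :
    factorFamily σ l g (Multiset.replicate l a) = rootFactor σ l a := by
  have h := factorFamily_partMod (σ := σ) (l := l) (g := g) 0
  rw [partMod_zero, hg.apply_zero] at h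
  rw [← Multiset.nsmul_singleton, ← add_zero (l • _), factorFamily_nsmul_add hl, h, mul_one]
  simp [rootFactorProd]

end Rectangles

end Macdonald

open Macdonald in
theorem Qprime_factorization_root_of_unity_general {k : Type*} {K : Type} [Field k] [Field K]
    [CharZero K] [Algebra k K] {q : K} (hq : Transcendental k q) {l : ℕ} (hl : 0 < l) {z : k}
    (hz : IsPrimitiveRoot z l) {n : ℕ} {μ : Multiset ℕ+} (hμ : wt μ ≤ n)
    {P : Multiset ℕ+ → SymFn (RatFunc K)} (hP : IsMacdonaldBasis (RatFunc.C q) RatFunc.X P) :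
    specialize (algebraMap k K z) (Qprime (RatFunc.C q) RatFunc.X P μ) =
      (∏ i ∈ Finset.range n, specialize (algebraMap k K z) (Qprime (RatFunc.C q) RatFunc.X P
        (Multiset.replicate l (Nat.succPNat i))) ^ (μ.count (Nat.succPNat i) / l)) *
      specialize (algebraMap k K z) (Qprime (RatFunc.C q) RatFunc.X P
        (∑ i ∈ Finset.range n,
          Multiset.replicate (μ.count (Nat.succPNat i) % l) (Nat.succPNat i))) := by
  obtain ⟨g, hg⟩ : ∃ g, IsReducedEigenfamily q (algebraMap k K z)⁻¹ l g :=
    exists_isReducedEigenfamily hl fun μ ρ h ↦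
      partMod_eq_of_eig_eq hq hl hz.inv (by rwa [map_inv₀])
  simp only [specialize_Qprime hq hl hz hg hP, factorFamily_replicate hl hg,
    ← partMod_eq_sum_replicate hμ, ← rootFactorProd_partDiv hμ]
  exact factorFamily_eq_mul_partMod μ

/-- **Factorization of `Q'_μ` at a primitive root of unity** (Theorem 5.1 of the paper).
Let `l > 0`, `ζ` a primitive `l`-th root of unity and `μ = (1^{m_1} 2^{m_2} ⋯ n^{m_n})` a
partition of `n > 0`.  Writing `m_i = l·q_i + r_i` with `0 ≤ r_i ≤ l-1` and
`μ̄ = (1^{r_1} 2^{r_2} ⋯ n^{r_n})`, one has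
`Q'_μ(x;q,ζ) = ∏_{i=1}^n (Q'_{(i^l)}(x;q,ζ))^{q_i} · Q'_{μ̄}(x;q,ζ)`. -/
theorem Qprime_factorization_root_of_unity
    (l : ℕ) (hl : 0 < l) (zeta : ℂ) (hzeta : IsPrimitiveRoot zeta l)
    (n : ℕ) (hn : 0 < n) (mu : Multiset ℕ+) (hmu : wt mu = n)
    (P : Multiset ℕ+ → SymFn FF) (hP : IsMacdonaldBasis qF tF P) :
    specT (RatFunc.C zeta) (Qprime qF tF P mu) =
      (∏ i ∈ Finset.range n,
        (specT (RatFunc.C zeta)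
            (Qprime qF tF P
              (Multiset.replicate l (⟨i + 1, Nat.succ_pos i⟩ : ℕ+)))) ^
          (Multiset.count (⟨i + 1, Nat.succ_pos i⟩ : ℕ+) mu / l)) *
      specT (RatFunc.C zeta)
        (Qprime qF tF P
          (∑ i ∈ Finset.range n,
            Multiset.replicate (Multiset.count (⟨i + 1, Nat.succ_pos i⟩ : ℕ+) mu % l)
              (⟨i + 1, Nat.succ_pos i⟩ : ℕ+))) := by
  exact Qprime_factorization_root_of_unity_general RatFunc.transcendental_X hl hzeta hmu.le hP
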